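/- Let x̄ be a local minimizer of problem (ODP) and suppose the standing sum-rule assumption holds. Then: (a) if NNAMCQ is satisfied at x̄, then ODP-subMFC holds at x̄; (b) if d ∈ Ĉ(x̄) ∩ 𝕊, ∇f(x̄) ≠ 0, and FOSCMS(d) is satisfied at x̄, then ODP-subMFC(d) holds at x̄. -/

import Mathlib

open Filter Topology Metric Set
open scoped RealInnerProductSpace Pointwise

noncomputable section

/-- Euclidean space `ℝ^n`. -/
abbrev Eu (n : ℕ) := EuclideanSpace ℝ (Fin n)

section Cones

variable {H : Type*} [NormedAddCommGroup H] [InnerProductSpace ℝ H]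

/-- Tangent (Bouligand) cone to `Ω` at `x` (empty if `x ∉ Ω`). -/
def tanCone (Ω : Set H) (x : H) : Set H :=
  {d | x ∈ Ω ∧ ∃ (dk : ℕ → H) (tk : ℕ → ℝ),
    Tendsto dk atTop (𝓝 d) ∧ (∀ k, 0 < tk k) ∧ Tendsto tk atTop (𝓝 0) ∧
    ∀ k, x + tk k • dk k ∈ Ω}

/-- Polar cone of a set. -/
def polarCone (C : Set H) : Set H := {y | ∀ x ∈ C, ⟪x, y⟫ ≤ 0}

/-- Regular (Fréchet) normal cone: polar of the tangent cone (empty if `x ∉ Ω`). -/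
def regNormal (Ω : Set H) (x : H) : Set H :=
  {η | x ∈ Ω ∧ η ∈ polarCone (tanCone Ω x)}

/-- Limiting (Mordukhovich) normal cone (empty if `x ∉ Ω`). -/
def limNormal (Ω : Set H) (x : H) : Set H :=
  {η | x ∈ Ω ∧ ∃ (xk ηk : ℕ → H),
    Tendsto xk atTop (𝓝 x) ∧ Tendsto ηk atTop (𝓝 η) ∧
    ∀ k, ηk k ∈ regNormal Ω (xk k)}

/-- Directional limiting normal cone to `Ω` at `x` in direction `d`. -/
def dirLimNormal (Ω : Set H) (x d : H) : Set H :=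
  {η | x ∈ Ω ∧ ∃ (dk : ℕ → H) (tk : ℕ → ℝ) (ηk : ℕ → H),
    Tendsto dk atTop (𝓝 d) ∧ (∀ k, 0 < tk k) ∧ Tendsto tk atTop (𝓝 0) ∧
    Tendsto ηk atTop (𝓝 η) ∧
    ∀ k, ηk k ∈ regNormal Ω (x + tk k • dk k)}

/-- The pair `(ξ, r)` as an element of the ℓ²-product `H ×₂ ℝ`. -/
def pl2 (ξ : H) (r : ℝ) : WithLp 2 (H × ℝ) := (WithLp.equiv 2 (H × ℝ)).symm (ξ, r)

/-- Epigraph of `φ` as a subset of the ℓ²-product `H ×₂ ℝ`. -/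
def epigraphSet (φ : H → ℝ) : Set (WithLp 2 (H × ℝ)) :=
  {p | φ ((WithLp.equiv 2 (H × ℝ)) p).1 ≤ ((WithLp.equiv 2 (H × ℝ)) p).2}

/-- Limiting subdifferential of `φ` at `x`. -/
def limSubdiff (φ : H → ℝ) (x : H) : Set H :=
  {ξ | pl2 ξ (-1) ∈ limNormal (epigraphSet φ) (pl2 x (φ x))}

/-- Directional limiting subdifferential of `φ` at `x` in direction `d`, where `φd`
denotes the directional derivative `φ'(x; d)`. -/
def dirLimSubdiff (φ : H → ℝ) (x d : H) (φd : ℝ) : Set H :=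
  {ξ | pl2 ξ (-1) ∈ dirLimNormal (epigraphSet φ) (pl2 x (φ x)) (pl2 d φd)}

/-- Directional neighborhood `B_{ε,δ}(d)`. -/
def dirNbhd (d : H) (ε δ : ℝ) : Set H :=
  {y | ‖y‖ ≤ ε ∧ ‖‖d‖ • y - ‖y‖ • d‖ ≤ δ * (‖y‖ * ‖d‖)}

end Cones

section Problem

variable {n l : ℕ}

/-- `F' x d` is the directional derivative of `F` at `x` in direction `d`. -/
def IsDirDeriv (F : Eu n → Eu l) (F' : Eu n → Eu n → Eu l) : Prop :=
  ∀ x d : Eu n,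
    Tendsto (fun t : ℝ => t⁻¹ • (F (x + t • d) - F x)) (𝓝[>] (0:ℝ)) (𝓝 (F' x d))

/-- Limiting subdifferential of the scalarization `⟨λ, F⟩` at `x`. -/
def scalSubdiff (F : Eu n → Eu l) (lam : Eu l) (x : Eu n) : Set (Eu n) :=
  limSubdiff (fun y => ⟪lam, F y⟫) x

/-- Directional limiting subdifferential of `⟨λ, F⟩` at `x` in direction `d`. -/
def scalDirSubdiff (F : Eu n → Eu l) (F' : Eu n → Eu n → Eu l) (lam : Eu l)
    (x d : Eu n) : Set (Eu n) :=
  dirLimSubdiff (fun y => ⟪lam, F y⟫) x d ⟪lam, F' x d⟫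

/-- Linearization cone. -/
def linCone (F : Eu n → Eu l) (F' : Eu n → Eu n → Eu l) (Γ : Set (Eu l)) (x : Eu n) :
    Set (Eu n) :=
  {d | F' x d ∈ tanCone Γ (F x)}

/-- Explicit critical cone `C(x̄)`. -/
def critCone (f : Eu n → ℝ) (F : Eu n → Eu l) (F' : Eu n → Eu n → Eu l)
    (Γ : Set (Eu l)) (x : Eu n) : Set (Eu n) :=
  {d | ⟪gradient f x, d⟫ ≤ 0 ∧ d ∈ linCone F F' Γ x}

/-- Implicit critical cone `Ĉ(x̄)`. -/
def implCritCone (f : Eu n → ℝ) (F : Eu n → Eu l) (Γ : Set (Eu l)) (x : Eu n) :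
    Set (Eu n) :=
  {d | ⟪gradient f x, d⟫ ≤ 0 ∧ d ∈ tanCone (F ⁻¹' Γ) x}

/-- M-stationarity. -/
def MStat (f : Eu n → ℝ) (F : Eu n → Eu l) (Γ : Set (Eu l)) (x : Eu n) : Prop :=
  ∃ lam : Eu l, -gradient f x ∈ scalSubdiff F lam x ∧ lam ∈ limNormal Γ (F x)

/-- M-stationarity in direction `d`. -/
def MStatDir (f : Eu n → ℝ) (F : Eu n → Eu l) (F' : Eu n → Eu n → Eu l)
    (Γ : Set (Eu l)) (x d : Eu n) : Prop :=
  ∃ lam : Eu l, -gradient f x ∈ scalDirSubdiff F F' lam x d ∧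
    lam ∈ dirLimNormal Γ (F x) (F' x d)

/-- Metric subregularity constraint qualification in direction `d`. -/
def MSCQdir (F : Eu n → Eu l) (Γ : Set (Eu l)) (x d : Eu n) : Prop :=
  ∃ ε > (0:ℝ), ∃ δ > (0:ℝ), ∃ κ > (0:ℝ), ∀ y : Eu n, y - x ∈ dirNbhd d ε δ →
    infDist y (F ⁻¹' Γ) ≤ κ * infDist (F y) Γ

/-- Metric subregularity constraint qualification. -/
def MSCQ (F : Eu n → Eu l) (Γ : Set (Eu l)) (x : Eu n) : Prop := MSCQdir F Γ x 0

/-- AM-stationary sequence w.r.t. `x`. -/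
def AMSeq (f : Eu n → ℝ) (F : Eu n → Eu l) (Γ : Set (Eu l)) (x : Eu n)
    (xk : ℕ → Eu n) (lamk δk : ℕ → Eu l) (εk : ℕ → Eu n) : Prop :=
  (∀ k, εk k - gradient f (xk k) ∈ scalSubdiff F (lamk k) (xk k)) ∧
  (∀ k, lamk k ∈ limNormal Γ (F (xk k) - δk k)) ∧
  Tendsto xk atTop (𝓝 x) ∧ Tendsto δk atTop (𝓝 0) ∧ Tendsto εk atTop (𝓝 0)

/-- AM-stationarity. -/
def AMStat (f : Eu n → ℝ) (F : Eu n → Eu l) (Γ : Set (Eu l)) (x : Eu n) : Prop :=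
  ∃ xk lamk δk εk, AMSeq f F Γ x xk lamk δk εk

/-- AM-stationary sequence w.r.t. `x` in direction `d`. -/
def AMSeqDir (f : Eu n → ℝ) (F : Eu n → Eu l) (Γ : Set (Eu l)) (x : Eu n)
    (xk : ℕ → Eu n) (lamk δk : ℕ → Eu l) (εk : ℕ → Eu n) (d : Eu n) : Prop :=
  AMSeq f F Γ x xk lamk δk εk ∧
  (∀ k, xk k ≠ x) ∧
  Tendsto (fun k => ‖xk k - x‖⁻¹ • (xk k - x)) atTop (𝓝 d) ∧
  Tendsto (fun k => ‖xk k - x‖⁻¹ • δk k) atTop (𝓝 (0 : Eu l)) ∧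
  (∃ θ : ℕ → ℝ, (∀ k, 0 ≤ θ k) ∧ Tendsto θ atTop (𝓝 0) ∧
    ∀ k, ‖‖δk k‖ • lamk k - ‖lamk k‖ • δk k‖ ≤ ‖δk k‖ * ‖lamk k‖ * θ k) ∧
  (∃ M : ℝ, ∀ k, ‖δk k‖ * ‖lamk k‖ / ‖xk k - x‖ ≤ M)

/-- AM-stationarity in direction `d`. -/
def AMStatDir (f : Eu n → ℝ) (F : Eu n → Eu l) (Γ : Set (Eu l)) (x d : Eu n) : Prop :=
  ∃ xk lamk δk εk, AMSeqDir f F Γ x xk lamk δk εk d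

/-- The Minkowski sum `Σ_i |λ_i| ∂(sgn(λ_i) F_i)(x; d)`. -/
def dirSumSet (F : Eu n → Eu l) (F' : Eu n → Eu n → Eu l) (lam : Eu l) (x d : Eu n) :
    Set (Eu n) :=
  {v | ∃ s : Fin l → Eu n,
    (∀ i, s i ∈ |lam i| • dirLimSubdiff (fun y => Real.sign (lam i) * F y i) x d
        (Real.sign (lam i) * F' x d i)) ∧
    v = ∑ i, s i}

/-- Standing sum-rule assumption. -/
def SumRule (F : Eu n → Eu l) (F' : Eu n → Eu n → Eu l) : Prop :=
  ∀ (x d : Eu n) (lam : Eu l), scalDirSubdiff F F' lam x d = dirSumSet F F' lam x d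

end Problem


section ODP

variable {n l t : ℕ}

/-- The box `Γ_j = ∏_i [a_i^j, b_i^j]` (interval endpoints in the extended reals). -/
def GammaJ (a b : Fin t → Fin l → EReal) (j : Fin t) : Set (Eu l) :=
  {y | ∀ i, a j i ≤ ((y i : ℝ) : EReal) ∧ ((y i : ℝ) : EReal) ≤ b j i}

/-- The orthodisjunctive set `Γ = ⋃_j Γ_j`. -/
def GammaODP (a b : Fin t → Fin l → EReal) : Set (Eu l) := ⋃ j, GammaJ a b j

/-- The index set `I(x, δ)` of active interval endpoints. -/
def activeI (F : Eu n → Eu l) (a b : Fin t → Fin l → EReal) (x : Eu n) (δ : Eu l) :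
    Set (Fin l) :=
  {i | ∃ j, F x - δ ∈ GammaJ a b j ∧
      ((((F x - δ) i : ℝ) : EReal) = a j i ∨ (((F x - δ) i : ℝ) : EReal) = b j i)}

/-- ODP subset Mangasarian–Fromovitz condition. -/
def ODPsubMFC (f : Eu n → ℝ) (F : Eu n → Eu l) (a b : Fin t → Fin l → EReal)
    (x : Eu n) : Prop :=
  ∃ (I : Set (Fin l)) (xk : ℕ → Eu n) (lamk δk : ℕ → Eu l) (εk : ℕ → Eu n),
    I ⊆ activeI F a b x 0 ∧
    AMSeq f F (GammaODP a b) x xk lamk δk εk ∧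
    (∀ k, I = activeI F a b (xk k) (δk k)) ∧
    (I = ∅ ∨ ∀ u : Eu l, u ≠ 0 → (∀ i, 0 ≤ u i) → (∀ i ∉ I, u i = 0) → ∀ k : ℕ,
      (0 : Eu n) ∉ {v | ∃ s : Fin l → Eu n,
        (∀ i ∈ I, s i ∈ u i • limSubdiff (fun y => Real.sign (lamk k i) * F y i) x) ∧
        v = ∑ i, I.indicator s i})

/-- ODP subset Mangasarian–Fromovitz condition in direction `d`. -/
def ODPsubMFCdir (f : Eu n → ℝ) (F : Eu n → Eu l) (F' : Eu n → Eu n → Eu l)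
    (a b : Fin t → Fin l → EReal) (x d : Eu n) : Prop :=
  ∃ (I : Set (Fin l)) (xk : ℕ → Eu n) (lamk δk : ℕ → Eu l) (εk : ℕ → Eu n),
    I ⊆ activeI F a b x 0 ∧
    AMSeqDir f F (GammaODP a b) x xk lamk δk εk d ∧
    (∀ k, I = activeI F a b (xk k) (δk k)) ∧
    (I = ∅ ∨ ∀ u : Eu l, u ≠ 0 → (∀ i, 0 ≤ u i) → (∀ i ∉ I, u i = 0) → ∀ k : ℕ,
      (0 : Eu n) ∉ {v | ∃ s : Fin l → Eu n,
        (∀ i ∈ I, s i ∈ u i • dirLimSubdiff (fun y => Real.sign (lamk k i) * F y i) x d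
            (Real.sign (lamk k i) * F' x d i)) ∧
        v = ∑ i, I.indicator s i})

/-- No nonzero abnormal multiplier constraint qualification. -/
def NNAMCQ (F : Eu n → Eu l) (Γ : Set (Eu l)) (x : Eu n) : Prop :=
  ∀ lam : Eu l, (0 : Eu n) ∈ scalSubdiff F lam x → lam ∈ limNormal Γ (F x) → lam = 0

/-- First-order sufficient condition for metric subregularity in direction `d`. -/
def FOSCMS (F : Eu n → Eu l) (F' : Eu n → Eu n → Eu l) (Γ : Set (Eu l))
    (x d : Eu n) : Prop :=
  ∀ lam : Eu l, (0 : Eu n) ∈ scalDirSubdiff F F' lam x d →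
    lam ∈ dirLimNormal Γ (F x) (F' x d) → lam = 0

end ODP

/-!
Start from feasible points `w k` approaching `x` along `d` at step lengths `T k`, with
`f (w k) ≤ f x + o(T k)`, and minimise `f + ‖· - w k‖² / T k + m * dist (F ·) Γ ²` near `x` for
large `m`. Fermat's rule makes a positive multiple of the residual `δ` of `F` against its projection
onto `Γ` a multiplier, which is a regular normal aligned with `δ`. For a union of boxes a small
change of `δ` and of the multiplier removes its zero entries at active indices: at a nearby point
of `Γ` with minimal active set such an entry sits at an upper endpoint of every box, where it may
be made positive. Along a subsequence the active set and the signs of the multipliers are constant,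
so nonnegative weights violating the subset condition, given these signs, form a nonzero directional
normal that is an abnormal multiplier, which FOSCMS(d) excludes. NNAMCQ is FOSCMS(0), so both parts
are the same argument.
-/

section RegularSubgradient

theorem tendsto_pl2 {H α : Type*} [NormedAddCommGroup H] {L : Filter α} {g : α → H} {r : α → ℝ}
    {g₀ : H} {r₀ : ℝ} (hg : Tendsto g L (𝓝 g₀)) (hr : Tendsto r L (𝓝 r₀)) :
    Tendsto (fun k => pl2 (g k) (r k)) L (𝓝 (pl2 g₀ r₀)) :=
  ((WithLp.prod_continuous_toLp 2 H ℝ).tendsto (g₀, r₀)).comp (hg.prodMk_nhds hr)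

theorem pl2_mem_epigraphSet {H : Type*} (φ : H → ℝ) (x : H) : pl2 x (φ x) ∈ epigraphSet φ :=
  le_refl (φ x)

theorem tendsto_add_smul {E α : Type*} [NormedAddCommGroup E] [NormedSpace ℝ E] {L : Filter α}
    {x d : E} {t : α → ℝ} {u : α → E} (ht : Tendsto t L (𝓝 0)) (hu : Tendsto u L (𝓝 d)) :
    Tendsto (fun k => x + t k • u k) L (𝓝 x) := by
  simpa using tendsto_const_nhds.add (ht.smul hu)

variable {H : Type*} [NormedAddCommGroup H] [InnerProductSpace ℝ H]

/-- `v` is a regular (Fréchet) subgradient of `φ` at `x`, in the variational (`ε`-support) form.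
It is the analytic source of regular normals to epigraphs, hence of limiting subgradients. -/
def IsRegularSubgradient (φ : H → ℝ) (x v : H) : Prop :=
  ∀ ε > 0, ∀ᶠ y in 𝓝 x, φ x + ⟪v, y - x⟫ - ε * ‖y - x‖ ≤ φ y

theorem IsRegularSubgradient.inner_le_of_tendsto {φ : H → ℝ} {x v d : H} {s : ℝ}
    (h : IsRegularSubgradient φ x v) {t σ : ℕ → ℝ} {u : ℕ → H} (ht₀ : ∀ k, 0 < t k)
    (ht : Tendsto t atTop (𝓝 0)) (hu : Tendsto u atTop (𝓝 d)) (hσ : Tendsto σ atTop (𝓝 s))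
    (hφ : ∀ k, φ (x + t k • u k) ≤ φ x + t k * σ k) : ⟪v, d⟫ ≤ s := by
  have approx : ∀ ε > 0, ⟪v, d⟫ - ε * ‖d‖ ≤ s := by
    intro ε hε
    refine le_of_tendsto_of_tendsto
      ((tendsto_const_nhds.inner hu).sub (tendsto_const_nhds.mul hu.norm)) hσ ?_
    filter_upwards [(tendsto_add_smul ht hu).eventually (h ε hε)] with k hk
    have hpos := ht₀ k
    simp only [add_sub_cancel_left, inner_smul_right, norm_smul, Real.norm_of_nonneg hpos.le] at hk
    refine le_of_mul_le_mul_left ?_ hpos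
    linarith [hφ k]
  have hlim : Tendsto (fun ε : ℝ => ⟪v, d⟫ - ε * ‖d‖) (𝓝[>] 0) (𝓝 ⟪v, d⟫) := by
    have : Tendsto (fun ε : ℝ => ⟪v, d⟫ - ε * ‖d‖) (𝓝 0) (𝓝 (⟪v, d⟫ - 0 * ‖d‖)) :=
      (by fun_prop : Continuous fun ε : ℝ => ⟪v, d⟫ - ε * ‖d‖).tendsto 0
    simpa using this.mono_left nhdsWithin_le_nhds
  exact le_of_tendsto hlim (eventually_mem_nhdsWithin.mono approx)

theorem IsRegularSubgradient.pl2_mem_regNormal {φ : H → ℝ} {x v : H}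
    (h : IsRegularSubgradient φ x v) :
    pl2 v (-1) ∈ regNormal (epigraphSet φ) (pl2 x (φ x)) := by
  refine ⟨pl2_mem_epigraphSet φ x, ?_⟩
  rintro d ⟨-, u, t, hu, ht₀, ht, hmem⟩
  have hu₁ : Tendsto (fun k => (u k).fst) atTop (𝓝 d.fst) :=
    ((WithLp.prod_continuous_ofLp 2 H ℝ).fst.tendsto d).comp hu
  have hu₂ : Tendsto (fun k => (u k).snd) atTop (𝓝 d.snd) :=
    ((WithLp.prod_continuous_ofLp 2 H ℝ).snd.tendsto d).comp hu
  have hle : ⟪v, d.fst⟫ ≤ d.snd := h.inner_le_of_tendsto ht₀ ht hu₁ hu₂ hmem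
  have hinner : ⟪d, pl2 v (-1)⟫ = ⟪v, d.fst⟫ - d.snd := by
    simp [pl2, WithLp.prod_inner_apply, real_inner_comm, sub_eq_add_neg]
  linarith

theorem isRegularSubgradient_const_iff {c : ℝ} {x v : H} :
    IsRegularSubgradient (fun _ => c) x v ↔ v = 0 := by
  refine ⟨fun h => ?_, ?_⟩
  · have ht₀ : ∀ k : ℕ, 0 < 1 / ((k : ℝ) + 1) := fun k => by positivity
    have hle : ⟪v, v⟫ ≤ 0 := h.inner_le_of_tendsto ht₀ tendsto_one_div_add_atTop_nhds_zero_nat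
      tendsto_const_nhds (tendsto_const_nhds (x := (0 : ℝ))) fun k => by simp
    exact real_inner_self_nonpos.mp hle
  · rintro rfl ε hε
    refine Eventually.of_forall fun y => ?_
    have : 0 ≤ ε * ‖y - x‖ := by positivity
    simpa using this

theorem isRegularSubgradient_neg_of_isLocalMin_add [CompleteSpace H] {φ ψ : H → ℝ} {z g : H}
    (hmin : IsLocalMin (fun y => φ y + ψ y) z) (hψ : HasGradientAt ψ g z) :
    IsRegularSubgradient φ z (-g) := by
  intro ε hε
  filter_upwards [hmin, (hasGradientAt_iff_isLittleO.mp hψ).def hε] with y hy hψy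
  have := (abs_le.mp hψy).2
  rw [inner_neg_left]
  linarith

theorem regNormal_subset_limNormal (Ω : Set H) (x : H) : regNormal Ω x ⊆ limNormal Ω x :=
  fun η h => ⟨h.1, fun _ => x, fun _ => η, tendsto_const_nhds, tendsto_const_nhds, fun _ => h⟩

theorem mem_limSubdiff_of_tendsto {φ : H → ℝ} {x v : H} (hφ : ContinuousAt φ x) {z w : ℕ → H}
    (hz : Tendsto z atTop (𝓝 x)) (hw : Tendsto w atTop (𝓝 v))
    (h : ∀ k, IsRegularSubgradient φ (z k) (w k)) : v ∈ limSubdiff φ x :=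
  ⟨pl2_mem_epigraphSet φ x, fun k => pl2 (z k) (φ (z k)), fun k => pl2 (w k) (-1),
    tendsto_pl2 hz (hφ.tendsto.comp hz), tendsto_pl2 hw tendsto_const_nhds,
    fun k => (h k).pl2_mem_regNormal⟩

theorem IsRegularSubgradient.mem_limSubdiff {φ : H → ℝ} {x v : H}
    (h : IsRegularSubgradient φ x v) : v ∈ limSubdiff φ x :=
  regNormal_subset_limNormal _ _ h.pl2_mem_regNormal

end RegularSubgradient

section DirectionalNormals

variable {H : Type*} [NormedAddCommGroup H] [InnerProductSpace ℝ H]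

theorem limNormal_subset_dirLimNormal_zero (Ω : Set H) (x : H) :
    limNormal Ω x ⊆ dirLimNormal Ω x 0 := by
  rintro η ⟨hx, z, ζ, hz, hζ, hmem⟩
  have hN : Tendsto (fun k => ‖z k - x‖) atTop (𝓝 0) := by simpa using (hz.sub_const x).norm
  have hS : Tendsto (fun k => √‖z k - x‖) atTop (𝓝 0) := by simpa using hN.sqrt
  -- A step length going to zero strictly slower than `‖z k - x‖`.
  set s : ℕ → ℝ := fun k => √‖z k - x‖ + 1 / ((k : ℝ) + 1) with hs
  have hs₀ : ∀ k, 0 < s k := fun k => by positivity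
  have hs_lim : Tendsto s atTop (𝓝 0) := by
    simpa [hs] using hS.add tendsto_one_div_add_atTop_nhds_zero_nat
  refine ⟨hx, fun k => (s k)⁻¹ • (z k - x), s, ζ, ?_, hs₀, hs_lim, hζ, fun k => ?_⟩
  · refine squeeze_zero_norm (fun k => ?_) hS
    have hsq : √‖z k - x‖ * √‖z k - x‖ = ‖z k - x‖ := Real.mul_self_sqrt (norm_nonneg _)
    have hle : √‖z k - x‖ ≤ s k := le_add_of_nonneg_right (by positivity)
    rw [norm_smul, norm_inv, Real.norm_of_nonneg (hs₀ k).le, inv_mul_le_iff₀ (hs₀ k)]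
    nlinarith [Real.sqrt_nonneg ‖z k - x‖]
  · simpa [smul_inv_smul₀ (hs₀ k).ne'] using hmem k

theorem dirLimNormal_zero (Ω : Set H) (x : H) : dirLimNormal Ω x 0 = limNormal Ω x := by
  refine Subset.antisymm ?_ (limNormal_subset_dirLimNormal_zero Ω x)
  rintro η ⟨hx, u, t, ζ, hu, -, ht, hζ, hmem⟩
  exact ⟨hx, fun k => x + t k • u k, ζ, tendsto_add_smul ht hu, hζ, hmem⟩

theorem dirLimSubdiff_zero (φ : H → ℝ) (x : H) : dirLimSubdiff φ x 0 0 = limSubdiff φ x := by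
  have h₀ : pl2 (0 : H) 0 = 0 := rfl
  simp only [dirLimSubdiff, limSubdiff, h₀, dirLimNormal_zero]

theorem mem_dirLimNormal_of_tendsto {Ω : Set H} {x d η : H} (hx : x ∈ Ω) {t : ℕ → ℝ} {y : ℕ → H}
    (ht₀ : ∀ k, 0 < t k) (ht : Tendsto t atTop (𝓝 0))
    (hy : Tendsto (fun k => (t k)⁻¹ • (y k - x)) atTop (𝓝 d)) (hη : ∀ k, η ∈ regNormal Ω (y k)) :
    η ∈ dirLimNormal Ω x d :=
  ⟨hx, _, t, fun _ => η, hy, ht₀, ht, tendsto_const_nhds, fun k => by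
    simpa [smul_inv_smul₀ (ht₀ k).ne'] using hη k⟩

theorem zero_mem_dirLimSubdiff_const (c : ℝ) (x d : H) :
    (0 : H) ∈ dirLimSubdiff (fun _ => c) x d 0 := by
  have ht₀ : ∀ k : ℕ, 0 < 1 / ((k : ℝ) + 1) := fun k => by positivity
  refine mem_dirLimNormal_of_tendsto (pl2_mem_epigraphSet (fun _ => c) x)
    (y := fun k : ℕ => pl2 (x + (1 / ((k : ℝ) + 1)) • d) c) ht₀
    tendsto_one_div_add_atTop_nhds_zero_nat ?_
    fun k => (isRegularSubgradient_const_iff.mpr rfl).pl2_mem_regNormal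
  refine tendsto_const_nhds.congr fun k => ?_
  rw [eq_inv_smul_iff₀ (ht₀ k).ne']
  simp [pl2, ← WithLp.toLp_sub, ← WithLp.toLp_smul]

end DirectionalNormals

section SubgradientExistence

variable {H : Type*} [NormedAddCommGroup H] [InnerProductSpace ℝ H]

theorem hasGradientAt_mul_norm_sub_sq [CompleteSpace H] (c : ℝ) (x z : H) :
    HasGradientAt (fun y => c * ‖y - x‖ ^ 2) ((2 * c) • (z - x)) z := by
  rw [hasGradientAt_iff_hasFDerivAt]
  refine (((hasFDerivAt_id z).sub_const x).norm_sq.const_mul c).congr_fderiv ?_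
  ext v
  simp
  ring

-- A minimiser `z` of `φ + c ‖· - x‖²` over the ball satisfies `c ‖z - x‖ ≤ K`, so it is interior as
-- soon as `c s > K`, and Fermat's rule there yields the subgradient `-2 c (z - x)`.
theorem exists_isRegularSubgradient_of_lipschitzOnWith [ProperSpace H] {φ : H → ℝ} {x : H}
    {s : ℝ} (hs : 0 < s) {K : NNReal} (hφ : LipschitzOnWith K φ (closedBall x s)) :
    ∃ z ∈ ball x s, ∃ v, ‖v‖ ≤ 2 * K ∧ IsRegularSubgradient φ z v := by
  set c : ℝ := (K + 1) / s
  have hc₀ : 0 < c := by positivity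
  have hcs : c * s = K + 1 := div_mul_cancel₀ _ hs.ne'
  have hx : x ∈ closedBall x s := mem_closedBall_self hs.le
  obtain ⟨z, hz, hmin⟩ := (isCompact_closedBall x s).exists_isMinOn ⟨x, hx⟩
    (f := fun y => φ y + c * ‖y - x‖ ^ 2) (hφ.continuousOn.add (by fun_prop))
  have hzK : c * ‖z - x‖ ≤ K := by
    rcases (norm_nonneg (z - x)).eq_or_lt with h | h
    · simp [← h]
    have hle : φ z + c * ‖z - x‖ ^ 2 ≤ φ x := by simpa using hmin hx
    have hlip := (abs_le.mp (hφ.norm_sub_le hz hx)).1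
    refine le_of_mul_le_mul_right ?_ h
    linarith
  have hball : z ∈ ball x s := by
    rw [mem_ball_iff_norm]
    refine lt_of_mul_lt_mul_left ?_ hc₀.le
    linarith
  refine ⟨z, hball, _, ?_, isRegularSubgradient_neg_of_isLocalMin_add
    (hmin.isLocalMin (closedBall_mem_nhds_of_mem hball)) (hasGradientAt_mul_norm_sub_sq c x z)⟩
  rw [norm_neg, norm_smul, Real.norm_of_nonneg (by positivity)]
  linarith

theorem limSubdiff_nonempty [ProperSpace H] {φ : H → ℝ} (hφ : LocallyLipschitz φ) (x : H) :
    (limSubdiff φ x).Nonempty := by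
  obtain ⟨K, U, hU, hK⟩ := hφ x
  obtain ⟨r, hr, hrU⟩ := nhds_basis_closedBall.mem_iff.mp hU
  have hs : Tendsto (fun k : ℕ => r * (1 / ((k : ℝ) + 1))) atTop (𝓝 0) := by
    simpa using tendsto_one_div_add_atTop_nhds_zero_nat.const_mul r
  have hs_le : ∀ k : ℕ, r * (1 / ((k : ℝ) + 1)) ≤ r := fun k =>
    mul_le_of_le_one_right hr.le (by rw [div_le_one (by positivity)]; simp)
  choose z hz v hv hreg using fun k : ℕ =>
    exists_isRegularSubgradient_of_lipschitzOnWith (by positivity : 0 < r * (1 / ((k : ℝ) + 1)))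
      (hK.mono ((closedBall_subset_closedBall (hs_le k)).trans hrU))
  have hz_lim : Tendsto z atTop (𝓝 x) :=
    tendsto_iff_dist_tendsto_zero.mpr
      (squeeze_zero (fun _ => dist_nonneg) (fun k => (mem_ball.mp (hz k)).le) hs)
  obtain ⟨w, -, ψ, hψ, hw⟩ := (isCompact_closedBall (0 : H) (2 * K)).tendsto_subseq
    fun k => mem_closedBall_zero_iff.mpr (hv k)
  exact ⟨w, mem_limSubdiff_of_tendsto hφ.continuous.continuousAt
    (hz_lim.comp hψ.tendsto_atTop) hw fun k => hreg (ψ k)⟩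

end SubgradientExistence

section Penalty

theorem exists_nat_forall_lt_add_mul {X : Type*} [TopologicalSpace X] {K : Set X}
    (hK : IsCompact K) {f g : X → ℝ} (hf : Continuous f) (hg : Continuous g) (hg₀ : ∀ y, 0 ≤ g y)
    {c : ℝ} (h : ∀ y ∈ K, g y = 0 → c < f y) : ∃ m : ℕ, ∀ y ∈ K, c < f y + m * g y := by
  refine hK.elim_directed_cover (fun m : ℕ => {y | c < f y + m * g y})
    (fun m => isOpen_lt continuous_const (hf.add (hg.const_mul _))) (fun y hy => ?_)
    (Monotone.directed_le fun m k hmk y (hy : c < f y + m * g y) => ?_)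
  · rw [mem_iUnion]
    rcases (hg₀ y).eq_or_lt with h₀ | hpos
    · exact ⟨0, by simpa using h y hy h₀.symm⟩
    · obtain ⟨m, hm⟩ := exists_nat_gt ((c - f y) / g y)
      rw [div_lt_iff₀ hpos] at hm
      exact ⟨m, show c < f y + m * g y by linarith⟩
  · have : (m : ℝ) * g y ≤ k * g y := by gcongr; exact hg₀ y
    exact hy.trans_le (by linarith)

-- Half of the penalty already keeps `f` above `c`, so the other half and the proximal term are
-- controlled by the gap `f w - c`.
theorem exists_isMinOn_penalty {X : Type*} [PseudoMetricSpace X] {K : Set X} (hK : IsCompact K)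
    {f g : X → ℝ} (hf : Continuous f) (hg : Continuous g) (hg₀ : ∀ y, 0 ≤ g y) {c : ℝ}
    (h : ∀ y ∈ K, g y = 0 → c < f y) {w : X} (hw : w ∈ K) (hgw : g w = 0) (q M : ℝ) :
    ∃ m : ℝ, M ≤ m ∧ ∃ z ∈ K, IsMinOn (fun y => f y + q * dist y w ^ 2 + 2 * m * g y) K z ∧
      q * dist z w ^ 2 + m * g z ≤ f w - c := by
  obtain ⟨N, hN⟩ := exists_nat_forall_lt_add_mul hK hf hg hg₀ h
  obtain ⟨z, hz, hmin⟩ := hK.exists_isMinOn ⟨w, hw⟩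
    (f := fun y => f y + q * dist y w ^ 2 + 2 * max M N * g y) (by fun_prop)
  refine ⟨max M N, le_max_left _ _, z, hz, hmin, ?_⟩
  have hle : f z + q * dist z w ^ 2 + 2 * max M N * g z ≤ f w := by
    simpa [hgw] using hmin hw
  have hNz : (N : ℝ) * g z ≤ max M N * g z := by gcongr; exacts [hg₀ z, le_max_right _ _]
  linarith [hN z hz]

theorem isBigO_sub_of_locallyLipschitz {X E : Type*} [SeminormedAddCommGroup X]
    [SeminormedAddCommGroup E] {F : X → E} (hF : LocallyLipschitz F) (z : X) :
    (fun y => F y - F z) =O[𝓝 z] fun y => y - z := by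
  obtain ⟨K, U, hU, hK⟩ := hF z
  refine Asymptotics.IsBigO.of_bound K ?_
  filter_upwards [hU] with y hy using hK.norm_sub_le hy (mem_of_mem_nhds hU)

variable {H E : Type*} [NormedAddCommGroup H] [InnerProductSpace ℝ H] [CompleteSpace H]
  [NormedAddCommGroup E]

theorem hasGradientAt_mul_norm_sub_sq_zero {F : H → E} {z : H}
    (hF : (fun y => F y - F z) =O[𝓝 z] fun y => y - z) (m : ℝ) :
    HasGradientAt (fun y => m * ‖F y - F z‖ ^ 2) 0 z := by
  rw [hasGradientAt_iff_isLittleO]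
  have hsq : (fun y => ‖y - z‖ ^ 2) =o[𝓝 z] fun y => y - z :=
    Asymptotics.isLittleO_pow_sub_sub z one_lt_two
  simpa using ((hF.norm_norm.pow 2).trans_isLittleO hsq).const_mul_left m

variable [InnerProductSpace ℝ E]

theorem isRegularSubgradient_of_isLocalMin_penalty {f : H → ℝ} {F : H → E}
    {Γ : Set E} {z g : H} {p : E} {m : ℝ} (hm : 0 ≤ m) (hf : HasGradientAt f g z)
    (hF : (fun y => F y - F z) =O[𝓝 z] fun y => y - z) (hp : p ∈ Γ)
    (hproj : infDist (F z) Γ = ‖F z - p‖)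
    (hmin : IsLocalMin (fun y => f y + m * infDist (F y) Γ ^ 2) z) :
    IsRegularSubgradient (fun y => ⟪(2 * m) • (F z - p), F y⟫) z (-g) := by
  have hψ : HasGradientAt (fun y => f y + m * ‖F y - F z‖ ^ 2) g z := by
    simpa using (hf.hasFDerivAt.fun_add
      (hasGradientAt_mul_norm_sub_sq_zero hF m).hasFDerivAt).hasGradientAt
  refine isRegularSubgradient_neg_of_isLocalMin_add ?_ hψ
  filter_upwards [hmin] with y hy
  have hdist : infDist (F y) Γ ^ 2 ≤ ‖F y - p‖ ^ 2 := by
    gcongr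
    · exact infDist_nonneg
    · exact dist_eq_norm (F y) p ▸ infDist_le_dist_of_mem hp
  have hexp : ‖F y - p‖ ^ 2 =
      ‖F z - p‖ ^ 2 + 2 * (⟪F z - p, F y⟫ - ⟪F z - p, F z⟫) + ‖F y - F z‖ ^ 2 := by
    rw [← inner_sub_right, ← norm_add_sq_real, add_comm, sub_add_sub_cancel]
  have hle := mul_le_mul_of_nonneg_left (hdist.trans_eq hexp) hm
  simp only [hproj, real_inner_smul_left, sub_self, norm_zero] at hy ⊢
  linarith

/-- The outcome of one penalty step for minimising `f` over `F ⁻¹' Γ`, started at a feasible `w`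
with step length `t` and accuracy `ρ`: a point `z` near `w` whose constraint residual `δ`, the
displacement of `F z` from a projection onto `Γ`, is a multiplier direction with scale `m`. -/
structure IsPenaltyPoint (f : H → ℝ) (F : H → E) (Γ : Set E) (w : H) (t ρ : ℝ) (z : H) (δ : E)
    (m : ℝ) : Prop where
  pos : 0 < m
  mem : F z - δ ∈ Γ
  norm_le : ∀ y ∈ Γ, ‖δ‖ ≤ ‖F z - y‖
  norm_sub_le : ‖z - w‖ ≤ ρ * t
  norm_residual_le : ‖δ‖ ≤ ρ * t
  mul_sq_le : m * ‖δ‖ ^ 2 ≤ 4 * ρ ^ 2 * t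
  isRegularSubgradient :
    IsRegularSubgradient (fun y => ⟪m • δ, F y⟫) z (-((2 / t) • (z - w)) - gradient f z)

theorem IsPenaltyPoint.residual_ne_zero {f : H → ℝ} {F : H → E} {Γ : Set E} {w z : H}
    {t ρ m : ℝ} {δ : E} (h : IsPenaltyPoint f F Γ w t ρ z δ m) (ht : 0 < t)
    (hz : 2 * ρ < ‖gradient f z‖) : δ ≠ 0 := by
  rintro rfl
  have hv := h.isRegularSubgradient
  simp only [smul_zero, inner_zero_left, isRegularSubgradient_const_iff] at hv
  have hnorm : ‖gradient f z‖ = 2 / t * ‖z - w‖ := by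
    rw [← sub_eq_zero.mp hv, norm_neg, norm_smul, Real.norm_of_nonneg (by positivity)]
  have hle : 2 / t * ‖z - w‖ ≤ 2 * ρ := by
    rw [div_mul_eq_mul_div, div_le_iff₀ ht]
    linarith [h.norm_sub_le]
  linarith

theorem isRegularSubgradient_of_isLocalMin_proximal_penalty {f : H → ℝ} {F : H → E} {Γ : Set E}
    {w z : H} {p : E} {t m : ℝ} (hm : 0 ≤ m) (hf : DifferentiableAt ℝ f z)
    (hF : (fun y => F y - F z) =O[𝓝 z] fun y => y - z) (hp : p ∈ Γ)
    (hproj : infDist (F z) Γ = ‖F z - p‖)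
    (hmin : IsLocalMin (fun y => f y + t⁻¹ * ‖y - w‖ ^ 2 + m * infDist (F y) Γ ^ 2) z) :
    IsRegularSubgradient (fun y => ⟪(2 * m) • (F z - p), F y⟫) z
      (-((2 / t) • (z - w)) - gradient f z) := by
  have hgrad : HasGradientAt (fun y => f y + t⁻¹ * ‖y - w‖ ^ 2)
      (gradient f z + (2 / t) • (z - w)) z := by
    simpa [div_eq_mul_inv, gradient] using (hf.hasGradientAt.hasFDerivAt.fun_add
      (hasGradientAt_mul_norm_sub_sq t⁻¹ w z).hasFDerivAt).hasGradientAt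
  rw [← neg_add', add_comm]
  exact isRegularSubgradient_of_isLocalMin_penalty hm hgrad hF hp hproj hmin

theorem exists_isPenaltyPoint {H : Type*} [NormedAddCommGroup H] [InnerProductSpace ℝ H]
    [ProperSpace H] [ProperSpace E] {f : H → ℝ} (hf : ContDiff ℝ 1 f)
    {F : H → E} (hF : LocallyLipschitz F) {Γ : Set E} (hΓ : IsClosed Γ) {x w : H} {r t ρ : ℝ}
    (hmin : IsMinOn f (closedBall x r ∩ F ⁻¹' Γ) x) (hw : F w ∈ Γ) (ht : 0 < t) (hρ : 0 < ρ)
    (hfw : f w ≤ f x + ρ ^ 2 / 2 * t) (hwr : ‖w - x‖ + ρ * t < r) :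
    ∃ z δ m, IsPenaltyPoint f F Γ w t ρ z δ m := by
  have hΓ₀ : Γ.Nonempty := ⟨_, hw⟩
  have hρt : 0 < ρ * t := by positivity
  have hwK : w ∈ closedBall x r := mem_closedBall_iff_norm.mpr (by linarith)
  have hfc : ∀ y ∈ closedBall x r, infDist (F y) Γ ^ 2 = 0 → f x - ρ ^ 2 / 2 * t < f y := by
    intro y hy h₀
    have hyΓ : F y ∈ Γ := (hΓ.mem_iff_infDist_zero hΓ₀).mpr (pow_eq_zero_iff two_ne_zero |>.mp h₀)
    exact (sub_lt_self _ (by positivity)).trans_le (hmin ⟨hy, hyΓ⟩)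
  obtain ⟨m, hm, z, -, hzmin, hbound⟩ := exists_isMinOn_penalty (isCompact_closedBall x r)
    (g := fun y => infDist (F y) Γ ^ 2) hf.continuous
    (((continuous_infDist_pt Γ).comp hF.continuous).pow 2) (fun y => sq_nonneg _) hfc hwK
    (by simp [infDist_zero_of_mem hw]) t⁻¹ t⁻¹
  have hm₀ : 0 < m := (inv_pos.mpr ht).trans_le hm
  obtain ⟨p, hp, hproj⟩ := hΓ.exists_infDist_eq_dist hΓ₀ (F z)
  rw [dist_eq_norm] at hproj
  simp only [dist_eq_norm, hproj] at hbound hzmin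
  have hsum : t⁻¹ * ‖z - w‖ ^ 2 + m * ‖F z - p‖ ^ 2 ≤ ρ ^ 2 * t := by linarith
  have le_of_sq : ∀ s, t⁻¹ * s ^ 2 ≤ ρ ^ 2 * t → s ≤ ρ * t := by
    intro s hs
    rw [inv_mul_le_iff₀ ht] at hs
    exact le_of_sq_le_sq (by linarith) hρt.le
  have hprox : 0 ≤ t⁻¹ * ‖z - w‖ ^ 2 := by positivity
  have hzw : ‖z - w‖ ≤ ρ * t :=
    le_of_sq _ ((le_add_of_nonneg_right (by positivity)).trans hsum)
  have hδ : ‖F z - p‖ ≤ ρ * t := by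
    refine le_of_sq _ ((mul_le_mul_of_nonneg_right hm (sq_nonneg _)).trans ?_)
    linarith
  have hzr : z ∈ ball x r :=
    mem_ball_iff_norm.mpr (by linarith [norm_sub_le_norm_sub_add_norm_sub z w x])
  refine ⟨z, F z - p, 2 * (2 * m), by positivity, by simpa using hp, fun y hy => ?_, hzw, hδ, ?_,
    isRegularSubgradient_of_isLocalMin_proximal_penalty (by positivity)
      (hf.differentiable one_ne_zero z) (isBigO_sub_of_locallyLipschitz hF z) hp hproj
      (hzmin.isLocalMin (closedBall_mem_nhds_of_mem hzr))⟩
  · rw [← hproj, ← dist_eq_norm]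
    exact infDist_le_dist_of_mem hy
  · linarith

end Penalty

section NormalGeometry

variable {H : Type*} [NormedAddCommGroup H] [InnerProductSpace ℝ H] {Ω : Set H} {x d : H}

theorem mem_tanCone_of_eventually (hx : x ∈ Ω) (h : ∀ᶠ s : ℝ in 𝓝[>] 0, x + s • d ∈ Ω) :
    d ∈ tanCone Ω x := by
  obtain ⟨s, hs, hmem⟩ := exists_seq_forall_of_frequently (h.and self_mem_nhdsWithin).frequently
  exact ⟨hx, fun _ => d, s, tendsto_const_nhds, fun k => (hmem k).2,
    tendsto_nhds_of_tendsto_nhdsWithin hs, fun k => (hmem k).1⟩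

theorem smul_mem_regNormal_of_forall_norm_le {z δ : H} {m : ℝ} (hm : 0 ≤ m) (hmem : z - δ ∈ Ω)
    (hle : ∀ y ∈ Ω, ‖δ‖ ≤ ‖z - y‖) : m • δ ∈ regNormal Ω (z - δ) := by
  refine ⟨hmem, ?_⟩
  rintro d ⟨-, u, t, hu, ht₀, ht, hk⟩
  have hbound : ∀ k, 2 * ⟪u k, δ⟫ ≤ t k * ‖u k‖ ^ 2 := by
    intro k
    have hpos := ht₀ k
    have hnorm : ‖δ‖ ≤ ‖δ - t k • u k‖ := by
      simpa only [sub_add_eq_sub_sub, sub_sub_cancel] using hle _ (hk k)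
    have hsq : ‖δ‖ ^ 2 ≤ ‖δ - t k • u k‖ ^ 2 := by gcongr
    rw [norm_sub_sq_real, real_inner_smul_right, norm_smul, Real.norm_of_nonneg hpos.le,
      real_inner_comm] at hsq
    refine le_of_mul_le_mul_left ?_ hpos
    linarith
  have hlim : 2 * ⟪d, δ⟫ ≤ 0 * ‖d‖ ^ 2 :=
    le_of_tendsto_of_tendsto' ((hu.inner tendsto_const_nhds).const_mul 2)
      (ht.mul (hu.norm.pow 2)) hbound
  rw [real_inner_smul_right]
  exact mul_nonpos_of_nonneg_of_nonpos hm (by linarith)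

end NormalGeometry

section Boxes

variable {l t : ℕ} {a b : Fin t → Fin l → EReal}

theorem continuous_coe_eval (i : Fin l) : Continuous fun y : Eu l => ((y i : ℝ) : EReal) :=
  continuous_coe_real_ereal.comp (by fun_prop)

theorem isClosed_GammaJ (a b : Fin t → Fin l → EReal) (j : Fin t) : IsClosed (GammaJ a b j) := by
  have hinter : GammaJ a b j =
      ⋂ i, (fun y : Eu l => ((y i : ℝ) : EReal)) ⁻¹' Icc (a j i) (b j i) := by
    ext y
    simp [GammaJ]
  rw [hinter]
  exact isClosed_iInter fun i => isClosed_Icc.preimage (continuous_coe_eval i)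

theorem isClosed_GammaODP (a b : Fin t → Fin l → EReal) : IsClosed (GammaODP a b) :=
  isClosed_iUnion_of_finite (isClosed_GammaJ a b)

theorem eventually_forall_mem_GammaJ_imp (a b : Fin t → Fin l → EReal) (y : Eu l) :
    ∀ᶠ z in 𝓝 y, ∀ j, z ∈ GammaJ a b j → y ∈ GammaJ a b j := by
  refine eventually_all.mpr fun j => ?_
  by_cases h : y ∈ GammaJ a b j
  · exact Eventually.of_forall fun _ _ => h
  · filter_upwards [(isClosed_GammaJ a b j).isOpen_compl.mem_nhds h] with z hz hz'
    exact absurd hz' hz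

theorem eventually_coe_eval_eq_imp (y : Eu l) (i : Fin l) (c : EReal) :
    ∀ᶠ z in 𝓝 y, ((z i : ℝ) : EReal) = c → ((y i : ℝ) : EReal) = c := by
  by_cases h : ((y i : ℝ) : EReal) = c
  · exact Eventually.of_forall fun _ _ => h
  · filter_upwards [(continuous_coe_eval i).continuousAt.eventually_ne h] with z hz hz'
    exact absurd hz' hz

/-- The indices at which `y` sits at an interval endpoint of some box containing it, so that
`activeI F a b x δ` is `activeIndices a b (F x - δ)`. -/
def activeIndices (a b : Fin t → Fin l → EReal) (y : Eu l) : Set (Fin l) :=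
  {i | ∃ j, y ∈ GammaJ a b j ∧ (((y i : ℝ) : EReal) = a j i ∨ ((y i : ℝ) : EReal) = b j i)}

theorem eventually_activeIndices_subset (a b : Fin t → Fin l → EReal) (y : Eu l) :
    ∀ᶠ z in 𝓝 y, activeIndices a b z ⊆ activeIndices a b y := by
  have ha : ∀ᶠ z in 𝓝 y, ∀ j i, ((z i : ℝ) : EReal) = a j i → ((y i : ℝ) : EReal) = a j i :=
    eventually_all.mpr fun j => eventually_all.mpr fun i => eventually_coe_eval_eq_imp y i _
  have hb : ∀ᶠ z in 𝓝 y, ∀ j i, ((z i : ℝ) : EReal) = b j i → ((y i : ℝ) : EReal) = b j i :=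
    eventually_all.mpr fun j => eventually_all.mpr fun i => eventually_coe_eval_eq_imp y i _
  filter_upwards [eventually_forall_mem_GammaJ_imp a b y, ha, hb] with z hz hza hzb
  rintro i ⟨j, hj, hi⟩
  exact ⟨j, hz j hj, hi.imp (hza j i) (hzb j i)⟩

theorem tendsto_add_smul_single (y : Eu l) (i : Fin l) (c : ℝ) :
    Tendsto (fun s : ℝ => y + s • EuclideanSpace.single i c) (𝓝[>] 0) (𝓝 y) := by
  have : Continuous fun s : ℝ => y + s • EuclideanSpace.single i c := by fun_prop
  simpa using (this.tendsto 0).mono_left nhdsWithin_le_nhds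

theorem add_smul_single_apply_of_ne (y : Eu l) {i k : Fin l} (hk : k ≠ i) (s c : ℝ) :
    (y + s • EuclideanSpace.single i c) k = y k := by
  simp [hk]

theorem eventually_add_smul_single_mem {y : Eu l} {j : Fin t} (hy : y ∈ GammaJ a b j)
    {i : Fin l} {c : ℝ} (hb : 0 < c → ((y i : ℝ) : EReal) ≠ b j i)
    (ha : c < 0 → ((y i : ℝ) : EReal) ≠ a j i) :
    ∀ᶠ s : ℝ in 𝓝[>] 0, y + s • EuclideanSpace.single i c ∈ GammaJ a b j := by
  have hcont := ((continuous_coe_eval i).tendsto y).comp (tendsto_add_smul_single y i c)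
  have lower : ∀ᶠ s : ℝ in 𝓝[>] 0, a j i ≤ ((y i + s * c : ℝ) : EReal) := by
    rcases lt_or_ge c 0 with hc | hc
    · filter_upwards [hcont.eventually_const_lt ((hy i).1.lt_of_ne' (ha hc))] with s hs
      simpa using hs.le
    · filter_upwards [self_mem_nhdsWithin] with s hs
      exact (hy i).1.trans (EReal.coe_le_coe_iff.mpr
        (le_add_of_nonneg_right (mul_nonneg (mem_Ioi.mp hs).le hc)))
  have upper : ∀ᶠ s : ℝ in 𝓝[>] 0, ((y i + s * c : ℝ) : EReal) ≤ b j i := by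
    rcases lt_or_ge 0 c with hc | hc
    · filter_upwards [hcont.eventually_lt_const ((hy i).2.lt_of_ne (hb hc))] with s hs
      simpa using hs.le
    · filter_upwards [self_mem_nhdsWithin] with s hs
      exact (EReal.coe_le_coe_iff.mpr (add_le_of_nonpos_right
        (mul_nonpos_of_nonneg_of_nonpos (mem_Ioi.mp hs).le hc))).trans (hy i).2
  filter_upwards [lower, upper] with s hs₁ hs₂ k
  rcases eq_or_ne k i with rfl | hk
  · simpa using And.intro hs₁ hs₂
  · rw [add_smul_single_apply_of_ne y hk]
    exact hy k

theorem mem_regNormal_GammaODP_iff {y η : Eu l} :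
    η ∈ regNormal (GammaODP a b) y ↔ y ∈ GammaODP a b ∧ ∀ j, y ∈ GammaJ a b j → ∀ i,
      (0 < η i → ((y i : ℝ) : EReal) = b j i) ∧ (η i < 0 → ((y i : ℝ) : EReal) = a j i) := by
  refine ⟨fun h => ⟨h.1, fun j hj i => ?_⟩, fun ⟨hy, hend⟩ => ⟨hy, ?_⟩⟩
  · have eq_zero_of_feasible : (∀ᶠ s : ℝ in 𝓝[>] 0,
        y + s • EuclideanSpace.single i (η i) ∈ GammaJ a b j) → η i = 0 := by
      intro hfeas
      have htan : EuclideanSpace.single i (η i) ∈ tanCone (GammaODP a b) y :=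
        mem_tanCone_of_eventually h.1 (hfeas.mono fun s hs => mem_iUnion_of_mem j hs)
      have hle : η i * η i ≤ 0 := by
        simpa [EuclideanSpace.inner_single_left] using h.2 _ htan
      nlinarith
    refine ⟨fun hpos => ?_, fun hneg => ?_⟩ <;> by_contra hne
    · exact hpos.ne' (eq_zero_of_feasible
        (eventually_add_smul_single_mem hj (fun _ => hne) fun hneg => absurd hneg hpos.not_gt))
    · exact hneg.ne (eq_zero_of_feasible
        (eventually_add_smul_single_mem hj (fun hpos => absurd hpos hneg.not_gt) fun _ => hne))
  · rintro d ⟨-, u, s, hu, hs₀, hs, hmem⟩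
    refine le_of_tendsto (hu.inner tendsto_const_nhds) ?_
    filter_upwards [(tendsto_add_smul hs hu).eventually
      (eventually_forall_mem_GammaJ_imp a b y)] with k hk
    obtain ⟨j, hj⟩ := mem_iUnion.mp (hmem k)
    rw [PiLp.inner_apply]
    refine Finset.sum_nonpos fun i _ => ?_
    obtain ⟨hb, ha⟩ := hend j (hk j hj) i
    have hi := hj i
    simp only [PiLp.add_apply, PiLp.smul_apply, smul_eq_mul] at hi
    change η i * u k i ≤ 0
    rcases lt_trichotomy (η i) 0 with hη | hη | hη
    · rw [← ha hη, EReal.coe_le_coe_iff, le_add_iff_nonneg_right] at hi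
      exact mul_nonpos_of_nonpos_of_nonneg hη.le (nonneg_of_mul_nonneg_right hi.1 (hs₀ k))
    · rw [hη, zero_mul]
    · rw [← hb hη, EReal.coe_le_coe_iff, add_le_iff_nonpos_right] at hi
      exact mul_nonpos_of_nonneg_of_nonpos hη.le (nonpos_of_mul_nonpos_right hi.2 (hs₀ k))

theorem eventually_coe_add_ne (r : ℝ) (c : EReal) :
    ∀ᶠ s : ℝ in 𝓝[>] 0, ((r + s : ℝ) : EReal) ≠ c := by
  have hinj : Function.Injective fun s : ℝ => ((r + s : ℝ) : EReal) :=
    EReal.coe_injective.comp (add_right_injective r)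
  exact (hinj.tendsto_cofinite.eventually (eventually_cofinite_ne c)).filter_mono
    ((nhdsGT_le_nhdsNE 0).trans (nhdsNE_le_cofinite 0))

theorem eventually_notMem_activeIndices_add_smul_single (a b : Fin t → Fin l → EReal) (y : Eu l)
    (i : Fin l) :
    ∀ᶠ s : ℝ in 𝓝[>] 0, i ∉ activeIndices a b (y + s • EuclideanSpace.single i 1) := by
  have hne : ∀ᶠ s : ℝ in 𝓝[>] 0, ∀ j,
      ((y i + s : ℝ) : EReal) ≠ a j i ∧ ((y i + s : ℝ) : EReal) ≠ b j i :=
    eventually_all.mpr fun j => (eventually_coe_add_ne _ _).and (eventually_coe_add_ne _ _)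
  filter_upwards [hne] with s hs
  rintro ⟨j, -, hj⟩
  simp only [PiLp.add_apply, PiLp.smul_apply, PiLp.single_apply, if_true, smul_eq_mul,
    mul_one] at hj
  exact hj.elim (hs j).1 (hs j).2

theorem eventually_mem_regNormal_add_smul_single {y lam : Eu l}
    (h : lam ∈ regNormal (GammaODP a b) y) {i : Fin l} (hlam : lam i = 0) {j : Fin t}
    (hj : y ∈ GammaJ a b j) (hi : ((y i : ℝ) : EReal) ≠ b j i) :
    ∀ᶠ s : ℝ in 𝓝[>] 0, lam ∈ regNormal (GammaODP a b) (y + s • EuclideanSpace.single i 1) := by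
  filter_upwards [eventually_add_smul_single_mem hj (fun _ => hi)
      fun hneg => absurd hneg zero_le_one.not_gt,
    (tendsto_add_smul_single y i 1).eventually (eventually_forall_mem_GammaJ_imp a b y)]
    with s hs hnear
  refine mem_regNormal_GammaODP_iff.mpr ⟨mem_iUnion_of_mem j hs, fun j' hj' k => ?_⟩
  rcases eq_or_ne k i with rfl | hk
  · simp [hlam]
  · rw [add_smul_single_apply_of_ne y hk]
    exact (mem_regNormal_GammaODP_iff.mp h).2 j' (hnear j' hj') k

theorem exists_mem_regNormal_forall_eq_upper {y lam : Eu l}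
    (h : lam ∈ regNormal (GammaODP a b) y) {r : ℝ} (hr : 0 < r) :
    ∃ y', ‖y' - y‖ < r ∧ lam ∈ regNormal (GammaODP a b) y' ∧
      ∀ i ∈ activeIndices a b y', lam i = 0 → ∀ j, y' ∈ GammaJ a b j →
        ((y' i : ℝ) : EReal) = b j i := by
  obtain ⟨z, ⟨hzr, hz⟩, hzmin⟩ := exists_minimalFor_of_wellFoundedLT
    (fun z => ‖z - y‖ < r ∧ lam ∈ regNormal (GammaODP a b) z) (activeIndices a b)
    ⟨y, by simpa using hr, h⟩
  refine ⟨z, hzr, hz, fun i hi hlam j hj => ?_⟩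
  by_contra hne
  have hnear : ∀ᶠ z' in 𝓝 z, ‖z' - y‖ < r ∧ activeIndices a b z' ⊆ activeIndices a b z :=
    ((continuous_id.sub continuous_const).norm.continuousAt.eventually_lt
      continuousAt_const hzr).and (eventually_activeIndices_subset a b z)
  obtain ⟨s, ⟨hsr, hsub⟩, hreg, hoff⟩ := ((tendsto_add_smul_single z i 1).eventually hnear
    |>.and ((eventually_mem_regNormal_add_smul_single hz hlam hj hne).and
      (eventually_notMem_activeIndices_add_smul_single a b z i))).exists
  exact hoff (hzmin ⟨hsr, hreg⟩ hsub hi)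

end Boxes

section SumRule

variable {n l t : ℕ} {F : Eu n → Eu l} {F' : Eu n → Eu n → Eu l}

theorem IsDirDeriv.apply_zero (hF' : IsDirDeriv F F') (x : Eu n) : F' x 0 = 0 :=
  tendsto_nhds_unique (hF' x 0) (by simp)

theorem mem_scalSubdiff_iff (hF' : IsDirDeriv F F') (hsum : SumRule F F') {lam : Eu l}
    {x v : Eu n} :
    v ∈ scalSubdiff F lam x ↔ ∃ s : Fin l → Eu n,
      (∀ i, s i ∈ |lam i| • limSubdiff (fun y => Real.sign (lam i) * F y i) x) ∧
        v = ∑ i, s i := by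
  have h := hsum x 0 lam
  simp only [scalDirSubdiff, dirSumSet, hF'.apply_zero, inner_zero_right, PiLp.zero_apply,
    mul_zero, dirLimSubdiff_zero] at h
  exact Set.ext_iff.mp h v

theorem exists_forall_add_smul_mem_scalSubdiff (hF : LocallyLipschitz F) (hF' : IsDirDeriv F F')
    (hsum : SumRule F F') {lam e : Eu l} {x v : Eu n} (hv : v ∈ scalSubdiff F lam x)
    (he : ∀ i, e i ≠ 0 → lam i = 0) :
    ∃ w, ∀ c : ℝ, 0 < c → v + c • w ∈ scalSubdiff F (lam + c • e) x := by
  obtain ⟨s, hs, rfl⟩ := (mem_scalSubdiff_iff hF' hsum).mp hv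
  have hlip : ∀ i, LocallyLipschitz fun y => Real.sign (e i) * F y i := fun i =>
    (Real.sign (e i) • EuclideanSpace.proj (𝕜 := ℝ) i :
      Eu l →L[ℝ] ℝ).lipschitz.locallyLipschitz.comp hF
  choose ξ hξ using fun i => limSubdiff_nonempty (hlip i) x
  refine ⟨∑ i, |e i| • ξ i, fun c hc => (mem_scalSubdiff_iff hF' hsum).mpr
    ⟨fun i => s i + c • |e i| • ξ i, fun i => ?_, ?_⟩⟩
  · rcases eq_or_ne (e i) 0 with h₀ | h₀
    · simpa [h₀] using hs i
    · have hsi : s i = 0 := by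
        obtain ⟨q, -, hq⟩ := hs i
        simpa [he i h₀] using hq.symm
      have hsign : Real.sign (c * e i) = Real.sign (e i) := by
        rcases h₀.lt_or_gt with h | h
        · rw [Real.sign_of_neg h, Real.sign_of_neg (mul_neg_of_pos_of_neg hc h)]
        · rw [Real.sign_of_pos h, Real.sign_of_pos (mul_pos hc h)]
      simp only [hsi, PiLp.add_apply, he i h₀, PiLp.smul_apply, smul_eq_mul, zero_add, hsign,
        abs_mul, abs_of_pos hc, mul_smul]
      exact smul_mem_smul_set (smul_mem_smul_set (hξ i))
  · rw [Finset.smul_sum, Finset.sum_add_distrib]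

end SumRule

section MultiplierPerturbation

variable {n l t : ℕ} {F : Eu n → Eu l} {F' : Eu n → Eu n → Eu l} {a b : Fin t → Fin l → EReal}

theorem add_mem_regNormal {H : Type*} [NormedAddCommGroup H] [InnerProductSpace ℝ H] {Ω : Set H}
    {x η ζ : H} (hη : η ∈ regNormal Ω x) (hζ : ζ ∈ regNormal Ω x) : η + ζ ∈ regNormal Ω x := by
  refine ⟨hη.1, fun d hd => ?_⟩
  rw [inner_add_right]
  exact add_nonpos (hη.2 d hd) (hζ.2 d hd)

theorem eventually_norm_smul_lt {E : Type*} [NormedAddCommGroup E] [NormedSpace ℝ E] (v : E)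
    {r : ℝ} (hr : 0 < r) : ∀ᶠ c : ℝ in 𝓝[>] 0, ‖c • v‖ < r := by
  have hcont : Continuous fun c : ℝ => ‖c • v‖ := by fun_prop
  refine ((hcont.tendsto 0).mono_left nhdsWithin_le_nhds).eventually_lt_const ?_
  simpa using hr

-- A zero multiplier entry at an active index where every box has its upper endpoint can be made
-- positive without leaving the normal cone.
theorem exists_near_mem_scalSubdiff_forall_ne_zero (hF : LocallyLipschitz F)
    (hF' : IsDirDeriv F F') (hsum : SumRule F F') {lam δ : Eu l} {x v : Eu n}
    (hv : v ∈ scalSubdiff F lam x) (hlam : lam ∈ regNormal (GammaODP a b) (F x - δ)) {r : ℝ}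
    (hr : 0 < r) :
    ∃ δ' lam' v', ‖δ' - δ‖ < r ∧ ‖lam' - lam‖ < r ∧ ‖v' - v‖ < r ∧
      v' ∈ scalSubdiff F lam' x ∧ lam' ∈ regNormal (GammaODP a b) (F x - δ') ∧
      ∀ i ∈ activeI F a b x δ', lam' i ≠ 0 := by
  classical
  obtain ⟨y, hy, hlam_y, hupper⟩ := exists_mem_regNormal_forall_eq_upper hlam hr
  let e : Eu l := WithLp.toLp 2 fun i => if i ∈ activeIndices a b y ∧ lam i = 0 then 1 else 0
  have he : ∀ i, e i = if i ∈ activeIndices a b y ∧ lam i = 0 then 1 else 0 := fun i => rfl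
  have he_supp : ∀ i, e i ≠ 0 → i ∈ activeIndices a b y ∧ lam i = 0 := by
    intro i hi
    by_contra h
    exact hi (by rw [he, if_neg h])
  have he_nonneg : ∀ i, 0 ≤ e i := fun i => by rw [he]; split_ifs <;> norm_num
  obtain ⟨w, hw⟩ := exists_forall_add_smul_mem_scalSubdiff hF hF' hsum hv fun i hi =>
    (he_supp i hi).2
  obtain ⟨c, ⟨hce, hcw⟩, hc⟩ := (((eventually_norm_smul_lt e hr).and
    (eventually_norm_smul_lt w hr)).and self_mem_nhdsWithin).exists
  have hc : 0 < c := hc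
  have hnormal : c • e ∈ regNormal (GammaODP a b) y := by
    refine mem_regNormal_GammaODP_iff.mpr ⟨hlam_y.1, fun j hj i => ⟨fun hpos => ?_, fun hneg => ?_⟩⟩
    · have hi := he_supp i (right_ne_zero_of_mul hpos.ne')
      exact hupper i hi.1 hi.2 j hj
    · exact absurd hneg (mul_nonneg hc.le (he_nonneg i)).not_gt
  refine ⟨F x - y, lam + c • e, v + c • w, ?_, by simpa using hce, by simpa using hcw, hw c hc, ?_,
    fun i hi => ?_⟩
  · rwa [sub_right_comm, norm_sub_rev]
  · rw [sub_sub_cancel]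
    exact add_mem_regNormal hlam_y hnormal
  · change i ∈ activeIndices a b (F x - (F x - y)) at hi
    rw [sub_sub_cancel] at hi
    by_cases h₀ : lam i = 0
    · simp [he, hi, h₀, hc.ne']
    · simp [he, h₀]

end MultiplierPerturbation

section SignedMultipliers

variable {n l t : ℕ} {F : Eu n → Eu l} {F' : Eu n → Eu n → Eu l}

/-- The multiplier with magnitudes `u` and the signs of `lam`; it turns the nonnegative weights of
the subset Mangasarian–Fromovitz conditions into candidate abnormal multipliers. -/
def signMul (u lam : Eu l) : Eu l := WithLp.toLp 2 fun i => u i * Real.sign (lam i)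

theorem signMul_apply (u lam : Eu l) (i : Fin l) : signMul u lam i = u i * Real.sign (lam i) :=
  rfl

theorem signMul_mem_regNormal {a b : Fin t → Fin l → EReal} {y u lam : Eu l}
    (h : lam ∈ regNormal (GammaODP a b) y) (hu : ∀ i, 0 ≤ u i) :
    signMul u lam ∈ regNormal (GammaODP a b) y := by
  rw [mem_regNormal_GammaODP_iff] at h ⊢
  refine ⟨h.1, fun j hj i => ?_⟩
  rw [signMul_apply]
  rcases lt_trichotomy (lam i) 0 with hi | hi | hi
  · have hneg : u i * Real.sign (lam i) ≤ 0 := by simpa [Real.sign_of_neg hi] using hu i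
    exact ⟨fun hpos => absurd hpos hneg.not_gt, fun _ => (h.2 j hj i).2 hi⟩
  · simp [hi]
  · have hpos : 0 ≤ u i * Real.sign (lam i) := by simpa [Real.sign_of_pos hi] using hu i
    exact ⟨fun _ => (h.2 j hj i).1 hi, fun hneg => absurd hneg hpos.not_gt⟩

theorem eq_zero_of_signMul_eq_zero {u lam : Eu l} (hlam : ∀ i, u i ≠ 0 → lam i ≠ 0)
    (h : signMul u lam = 0) : u = 0 := by
  ext i
  by_contra hi
  have : u i * Real.sign (lam i) = 0 := by rw [← signMul_apply, h, PiLp.zero_apply]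
  exact (mul_ne_zero hi (Real.sign_eq_zero_iff.not.mpr (hlam i hi))) this

theorem mem_abs_smul_dirLimSubdiff_of_mem_smul {φ : Eu n → ℝ} {x d v : Eu n} {φd u r : ℝ}
    (hu : 0 ≤ u) (hr : u ≠ 0 → r ≠ 0)
    (hv : v ∈ u • dirLimSubdiff (fun y => Real.sign r * φ y) x d (Real.sign r * φd)) :
    v ∈ |u * Real.sign r| • dirLimSubdiff (fun y => Real.sign (u * Real.sign r) * φ y) x d
      (Real.sign (u * Real.sign r) * φd) := by
  rcases hu.eq_or_lt with rfl | hpos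
  · obtain ⟨q, -, rfl⟩ := hv
    simpa using smul_mem_smul_set (a := (0 : ℝ)) (zero_mem_dirLimSubdiff_const 0 x d)
  · rcases (hr hpos.ne').lt_or_gt with h | h
    · simpa [Real.sign_of_neg h, Real.sign_of_neg (neg_neg_of_pos hpos), abs_of_pos hpos] using hv
    · simpa [Real.sign_of_pos h, Real.sign_of_pos hpos, abs_of_pos hpos] using hv

theorem signMul_congr {lam lam' : Eu l}
    (h : ∀ i, SignType.sign (lam i) = SignType.sign (lam' i)) (u : Eu l) :
    signMul u lam = signMul u lam' := by
  have cast_sign : ∀ r : ℝ, Real.sign r = (SignType.sign r : ℝ) := by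
    intro r
    rcases lt_trichotomy r 0 with hr | rfl | hr
    · simp [Real.sign_of_neg hr, sign_neg hr]
    · simp
    · simp [Real.sign_of_pos hr, sign_pos hr]
  ext i
  rw [signMul_apply, signMul_apply, cast_sign, cast_sign, h i]

theorem zero_notMem_of_FOSCMS {Γ : Set (Eu l)} {x d : Eu n} (hsum : SumRule F F')
    (h : FOSCMS F F' Γ x d) {I : Set (Fin l)} {u lam : Eu l} (hu₀ : u ≠ 0) (hu : ∀ i, 0 ≤ u i)
    (huI : ∀ i ∉ I, u i = 0) (hlam : ∀ i ∈ I, lam i ≠ 0)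
    (hnormal : signMul u lam ∈ dirLimNormal Γ (F x) (F' x d)) :
    (0 : Eu n) ∉ {v | ∃ s : Fin l → Eu n,
      (∀ i ∈ I, s i ∈ u i • dirLimSubdiff (fun y => Real.sign (lam i) * F y i) x d
        (Real.sign (lam i) * F' x d i)) ∧ v = ∑ i, I.indicator s i} := by
  rintro ⟨s, hs, hzero⟩
  have hlam' : ∀ i, u i ≠ 0 → lam i ≠ 0 := fun i hi => hlam i (by_contra fun h => hi (huI i h))
  refine hu₀ (eq_zero_of_signMul_eq_zero hlam' (h _ ?_ hnormal))
  rw [hsum]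
  refine ⟨I.indicator s, fun i => ?_, hzero⟩
  by_cases hi : i ∈ I
  · rw [indicator_of_mem hi]
    exact mem_abs_smul_dirLimSubdiff_of_mem_smul (hu i) (hlam' i) (hs i hi)
  · have hzero_mem := smul_mem_smul_set (a := (0 : ℝ)) (zero_mem_dirLimSubdiff_const 0 x d)
    simpa [signMul_apply, huI i hi, hi] using hzero_mem

theorem FOSCMS_zero_iff (hF' : IsDirDeriv F F') {Γ : Set (Eu l)} {x : Eu n} :
    FOSCMS F F' Γ x 0 ↔ NNAMCQ F Γ x := by
  simp only [FOSCMS, NNAMCQ, scalDirSubdiff, scalSubdiff, hF'.apply_zero, inner_zero_right,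
    dirLimSubdiff_zero, dirLimNormal_zero]

end SignedMultipliers

section Alignment

theorem norm_le_two_mul_of_norm_sub_le {E : Type*} [NormedAddCommGroup E] {v v' : E}
    {σ : ℝ} (hσ : σ ≤ 1 / 2) (h : ‖v' - v‖ ≤ σ * ‖v‖) : ‖v‖ ≤ 2 * ‖v'‖ ∧ ‖v'‖ ≤ 2 * ‖v‖ := by
  have hhalf : σ * ‖v‖ ≤ 1 / 2 * ‖v‖ := by gcongr
  have hdiff := abs_le.mp ((abs_norm_sub_norm_le v' v).trans h)
  constructor <;> linarith [norm_nonneg v]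

variable {E : Type*} [NormedAddCommGroup E] [NormedSpace ℝ E]

theorem norm_norm_smul_sub_norm_smul_le {m : ℝ} (hm : 0 ≤ m) (u v : E) :
    ‖‖u‖ • v - ‖v‖ • u‖ ≤ 2 * (‖u‖ * ‖v - m • u‖) := by
  have hsplit : ‖u‖ • v - ‖v‖ • u = ‖u‖ • (v - m • u) - (‖v‖ - ‖m • u‖) • u := by
    rw [norm_smul, Real.norm_of_nonneg hm]
    module
  have hdiff : |‖v‖ - ‖m • u‖| ≤ ‖v - m • u‖ := abs_norm_sub_norm_le _ _
  calc ‖‖u‖ • v - ‖v‖ • u‖ ≤ ‖‖u‖ • (v - m • u)‖ + ‖(‖v‖ - ‖m • u‖) • u‖ :=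
        hsplit ▸ norm_sub_le _ _
    _ = ‖u‖ * ‖v - m • u‖ + |‖v‖ - ‖m • u‖| * ‖u‖ := by
        rw [norm_smul, norm_smul, norm_norm, Real.norm_eq_abs]
    _ ≤ ‖u‖ * ‖v - m • u‖ + ‖v - m • u‖ * ‖u‖ := by gcongr
    _ = 2 * (‖u‖ * ‖v - m • u‖) := by ring

theorem norm_norm_smul_sub_norm_smul_le_of_near {u u' v' : E} {m σ : ℝ} (hm : 0 ≤ m)
    (hσ₀ : 0 ≤ σ) (hσ : σ ≤ 1 / 2) (hu : ‖u' - u‖ ≤ σ * ‖u‖) (hv : ‖v' - m • u‖ ≤ σ * ‖m • u‖) :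
    ‖‖u'‖ • v' - ‖v'‖ • u'‖ ≤ ‖u'‖ * ‖v'‖ * (8 * σ) := by
  have hmu : ‖m • (u' - u)‖ ≤ σ * ‖m • u‖ := by
    rw [norm_smul, norm_smul, mul_left_comm]
    gcongr
  have hclose : ‖v' - m • u'‖ ≤ 4 * σ * ‖v'‖ := by
    calc ‖v' - m • u'‖ = ‖(v' - m • u) - m • (u' - u)‖ := by congr 1; module
      _ ≤ ‖v' - m • u‖ + ‖m • (u' - u)‖ := norm_sub_le _ _
      _ ≤ 2 * σ * ‖m • u‖ := by linarith
      _ ≤ 2 * σ * (2 * ‖v'‖) := by gcongr; exact (norm_le_two_mul_of_norm_sub_le hσ hv).1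
      _ = 4 * σ * ‖v'‖ := by ring
  calc ‖‖u'‖ • v' - ‖v'‖ • u'‖ ≤ 2 * (‖u'‖ * ‖v' - m • u'‖) :=
        norm_norm_smul_sub_norm_smul_le hm u' v'
    _ ≤ 2 * (‖u'‖ * (4 * σ * ‖v'‖)) := by gcongr
    _ = ‖u'‖ * ‖v'‖ * (8 * σ) := by ring

end Alignment

section ApproximateStationarity

variable {n l t : ℕ} {f : Eu n → ℝ} {F : Eu n → Eu l} {F' : Eu n → Eu n → Eu l}
  {a b : Fin t → Fin l → EReal}

/-- One entry `(x, lam, δ, ε)` of an approximately M-stationary sequence. -/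
structure AMTuple (n l : ℕ) where
  x : Eu n
  lam : Eu l
  δ : Eu l
  ε : Eu n

/-- `p` is an approximately M-stationary tuple near the feasible point `w`, at step length `s` and
accuracy `ρ`, whose multiplier vanishes at no active index. The last two estimates are those of
directional stationarity; they hold away from critical points of `f`, where the residual of the
underlying penalty step cannot vanish. -/
structure IsAMStep (f : Eu n → ℝ) (F : Eu n → Eu l) (a b : Fin t → Fin l → EReal) (w : Eu n)
    (s ρ : ℝ) (p : AMTuple n l) : Prop where
  mem_scalSubdiff : p.ε - gradient f p.x ∈ scalSubdiff F p.lam p.x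
  mem_regNormal : p.lam ∈ regNormal (GammaODP a b) (F p.x - p.δ)
  lam_ne_zero : ∀ i ∈ activeI F a b p.x p.δ, p.lam i ≠ 0
  norm_sub_le : ‖p.x - w‖ ≤ ρ * s
  norm_δ_le : ‖p.δ‖ ≤ 2 * ρ * s
  norm_ε_le : ‖p.ε‖ ≤ 3 * ρ
  aligned : 2 * ρ < ‖gradient f p.x‖ →
    ‖‖p.δ‖ • p.lam - ‖p.lam‖ • p.δ‖ ≤ ‖p.δ‖ * ‖p.lam‖ * (8 * ρ)
  norm_mul_norm_le : 2 * ρ < ‖gradient f p.x‖ → ‖p.δ‖ * ‖p.lam‖ ≤ 16 * ρ ^ 2 * s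

theorem exists_pos_le_and_imp_le {ρ τ μ ν : ℝ} (hρ : 0 < ρ) (hτ : 0 < τ) (P : Prop)
    (h : P → 0 < μ ∧ 0 < ν) :
    ∃ r > 0, r ≤ ρ ∧ r ≤ τ ∧ (P → r ≤ μ ∧ r ≤ ν) := by
  by_cases hP : P
  · obtain ⟨hμ, hν⟩ := h hP
    exact ⟨min (min ρ τ) (min μ ν), by positivity, by simp, by simp, fun _ => by simp⟩
  · exact ⟨min ρ τ, by positivity, by simp, by simp, fun h => absurd h hP⟩

theorem IsPenaltyPoint.exists_isAMStep (hF : LocallyLipschitz F) (hF' : IsDirDeriv F F')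
    (hsum : SumRule F F') {w z : Eu n} {s ρ m : ℝ} {δ : Eu l} (hs : 0 < s) (hρ : 0 < ρ)
    (h : IsPenaltyPoint f F (GammaODP a b) w s ρ z δ m) : ∃ p, IsAMStep f F a b w s ρ p := by
  have hσ₀ : 0 < min ρ (1 / 2) := by positivity
  obtain ⟨r, hr, hrρ, hrs, hrδ⟩ := exists_pos_le_and_imp_le (μ := min ρ (1 / 2) * ‖δ‖)
    (ν := min ρ (1 / 2) * ‖m • δ‖) hρ (mul_pos hρ hs) (δ ≠ 0) fun hδ =>
      ⟨mul_pos hσ₀ (norm_pos_iff.mpr hδ),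
        mul_pos hσ₀ (norm_pos_iff.mpr (smul_ne_zero h.pos.ne' hδ))⟩
  obtain ⟨δ', lam, v, hδ', hlam, hv, hsub, hnormal, hne⟩ :=
    exists_near_mem_scalSubdiff_forall_ne_zero hF hF' hsum h.isRegularSubgradient.mem_limSubdiff
      (smul_mem_regNormal_of_forall_norm_le h.pos.le h.mem h.norm_le) hr
  have hprox : ‖(2 / s) • (z - w)‖ ≤ 2 * ρ := by
    rw [norm_smul, Real.norm_of_nonneg (by positivity), div_mul_eq_mul_div, div_le_iff₀ hs]
    linarith [h.norm_sub_le]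
  have hnear : 2 * ρ < ‖gradient f z‖ →
      ‖δ' - δ‖ ≤ min ρ (1 / 2) * ‖δ‖ ∧ ‖lam - m • δ‖ ≤ min ρ (1 / 2) * ‖m • δ‖ := fun hz =>
    (hrδ (h.residual_ne_zero hs hz)).imp hδ'.le.trans hlam.le.trans
  refine ⟨⟨z, lam, δ', v + gradient f z⟩, by simpa using hsub, hnormal, hne, h.norm_sub_le, ?_, ?_,
    fun hz => ?_, fun hz => ?_⟩
  · have := norm_le_norm_add_norm_sub' δ' δ
    linarith [h.norm_residual_le]
  · have hsplit : v + gradient f z =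
        (v - (-((2 / s) • (z - w)) - gradient f z)) - (2 / s) • (z - w) := by abel
    rw [hsplit]
    linarith [_root_.norm_sub_le (v - (-((2 / s) • (z - w)) - gradient f z)) ((2 / s) • (z - w))]
  · refine (norm_norm_smul_sub_norm_smul_le_of_near h.pos.le hσ₀.le (min_le_right _ _)
      (hnear hz).1 (hnear hz).2).trans ?_
    gcongr
    exact min_le_left _ _
  · calc ‖δ'‖ * ‖lam‖ ≤ (2 * ‖δ‖) * (2 * ‖m • δ‖) := by
          gcongr
          · exact (norm_le_two_mul_of_norm_sub_le (min_le_right _ _) (hnear hz).1).2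
          · exact (norm_le_two_mul_of_norm_sub_le (min_le_right _ _) (hnear hz).2).2
      _ = 4 * (m * ‖δ‖ ^ 2) := by rw [norm_smul, Real.norm_of_nonneg h.pos.le]; ring
      _ ≤ 16 * ρ ^ 2 * s := by linarith [h.mul_sq_le]

end ApproximateStationarity

section DirectionalConvergence

variable {ι E : Type*} {L : Filter ι} [NormedAddCommGroup E] [NormedSpace ℝ E] {T : ι → ℝ} {x d : E}

theorem tendsto_inv_smul_zero_of_norm_le {u : ι → E} {ρ : ι → ℝ} (hT : ∀ k, 0 < T k)
    (hρ : Tendsto ρ L (𝓝 0)) (hu : ∀ k, ‖u k‖ ≤ ρ k * T k) :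
    Tendsto (fun k => (T k)⁻¹ • u k) L (𝓝 0) := by
  refine squeeze_zero_norm (fun k => ?_) hρ
  rw [norm_smul, norm_inv, Real.norm_of_nonneg (hT k).le, inv_mul_le_iff₀ (hT k), mul_comm]
  exact hu k

theorem tendsto_of_tendsto_inv_smul_sub {y : ι → E} (hT : ∀ k, 0 < T k) (hT₀ : Tendsto T L (𝓝 0))
    (hy : Tendsto (fun k => (T k)⁻¹ • (y k - x)) L (𝓝 d)) : Tendsto y L (𝓝 x) := by
  simpa only [smul_inv_smul₀ (hT _).ne', add_sub_cancel] using tendsto_add_smul (x := x) hT₀ hy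

theorem tendsto_norm_inv_smul_of_tendsto_inv_smul {G : Type*} [NormedAddCommGroup G]
    [NormedSpace ℝ G] {v : ι → E} {u : ι → G} {c : G} (hT : ∀ k, 0 < T k) (hd : ‖d‖ = 1)
    (hv : Tendsto (fun k => (T k)⁻¹ • v k) L (𝓝 d))
    (hu : Tendsto (fun k => (T k)⁻¹ • u k) L (𝓝 c)) :
    Tendsto (fun k => ‖v k‖⁻¹ • u k) L (𝓝 c) := by
  have h := (hv.norm.inv₀ (by simp [hd])).smul hu
  rw [hd, inv_one, one_smul] at h
  refine h.congr fun k => ?_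
  have hTk := hT k
  rw [smul_smul, norm_smul, norm_inv, Real.norm_of_nonneg hTk.le, mul_inv, inv_inv, mul_right_comm,
    mul_inv_cancel₀ hTk.ne', one_mul]

end DirectionalConvergence

section LocalBehaviour

theorem exists_isMinOn_closedBall_inter {α β : Type*} [PseudoMetricSpace α] [Preorder β] {f : α → β}
    {X : Set α} {x : α} (h : IsLocalMinOn f X x) : ∃ r > 0, IsMinOn f (closedBall x r ∩ X) x := by
  obtain ⟨r, hr, hball⟩ := nhds_basis_closedBall.mem_iff.mp (eventually_nhdsWithin_iff.mp h)
  exact ⟨r, hr, fun y hy => hball hy.1 hy.2⟩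

variable {H : Type*} [NormedAddCommGroup H] [InnerProductSpace ℝ H] [CompleteSpace H] {f : H → ℝ}

theorem continuous_gradient (hf : ContDiff ℝ 1 f) : Continuous (gradient f) :=
  (InnerProductSpace.toDual ℝ H).symm.continuous.comp (hf.continuous_fderiv one_ne_zero)

theorem tendsto_inv_mul_sub_gradient {ι : Type*} {L : Filter ι} {x d : H}
    (hf : DifferentiableAt ℝ f x) {T : ι → ℝ} {u : ι → H} (hT : ∀ k, 0 < T k)
    (hT₀ : Tendsto T L (𝓝 0)) (hu : Tendsto u L (𝓝 d)) :
    Tendsto (fun k => (T k)⁻¹ * (f (x + T k • u k) - f x)) L (𝓝 ⟪gradient f x, d⟫) := by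
  have hstep : Tendsto (fun k => T k • u k) L (𝓝 0) := by simpa using hT₀.smul hu
  exact (hasFDerivWithinAt_univ.mpr hf.hasGradientAt.hasFDerivAt).lim hstep
    (.of_forall fun _ => mem_univ _) (hu.congr fun k => (inv_smul_smul₀ (hT k).ne' _).symm)

end LocalBehaviour

section Sequences

theorem exists_subsequence_of_eventually_exists {P α : Type*} [Finite α] {Q : ℕ → P → Prop}
    (h : ∀ᶠ k in atTop, ∃ p, Q k p) (g : P → α) :
    ∃ (φ : ℕ → ℕ) (p : ℕ → P) (c : α), Tendsto φ atTop atTop ∧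
      ∀ k, Q (φ k) (p k) ∧ g (p k) = c := by
  have hfreq : ∃ᶠ k in atTop, ∃ c, ∃ p, Q k p ∧ g p = c :=
    (h.mono fun k ⟨p, hp⟩ => ⟨g p, p, hp, rfl⟩).frequently
  obtain ⟨c, hc⟩ := frequently_exists.mp hfreq
  obtain ⟨φ, hφ, hQ⟩ := extraction_of_frequently_atTop hc
  choose p hp using hQ
  exact ⟨φ, p, c, hφ.tendsto_atTop, hp⟩

variable {n l t : ℕ} {f : Eu n → ℝ} {F : Eu n → Eu l} {F' : Eu n → Eu n → Eu l}
  {Γ : Set (Eu l)} {a b : Fin t → Fin l → EReal} {x d : Eu n}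

theorem IsDirDeriv.tendsto_inv_smul_sub {ι : Type*} {L : Filter ι} (hF' : IsDirDeriv F F')
    (hF : LocallyLipschitz F) {T : ι → ℝ} {z : ι → Eu n} (hT : ∀ k, 0 < T k)
    (hT₀ : Tendsto T L (𝓝 0)) (hz : Tendsto (fun k => (T k)⁻¹ • (z k - x)) L (𝓝 d)) :
    Tendsto (fun k => (T k)⁻¹ • (F (z k) - F x)) L (𝓝 (F' x d)) := by
  have hray : Tendsto (fun k => (T k)⁻¹ • (F (x + T k • d) - F x)) L (𝓝 (F' x d)) :=
    (hF' x d).comp (tendsto_nhdsWithin_iff.mpr ⟨hT₀, .of_forall hT⟩)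
  have hrayx : Tendsto (fun k => x + T k • d) L (𝓝 x) :=
    tendsto_add_smul hT₀ tendsto_const_nhds
  obtain ⟨K, U, hU, hK⟩ := hF x
  have hdiff : Tendsto (fun k => (T k)⁻¹ • (F (z k) - F (x + T k • d))) L (𝓝 0) := by
    have hbound : Tendsto (fun k => K * ‖(T k)⁻¹ • (z k - x) - d‖) L (𝓝 0) := by
      simpa using ((hz.sub_const d).norm).const_mul (K : ℝ)
    refine squeeze_zero_norm' ?_ hbound
    filter_upwards [hrayx.eventually hU, (tendsto_of_tendsto_inv_smul_sub hT hT₀ hz).eventually hU]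
      with k hray_mem hz_mem
    have hscale : (T k)⁻¹ • (z k - x) - d = (T k)⁻¹ • (z k - (x + T k • d)) := by
      rw [← sub_sub, smul_sub _ (z k - x), inv_smul_smul₀ (hT k).ne']
    rw [hscale, norm_smul, norm_smul, mul_left_comm]
    gcongr
    exact hK.norm_sub_le hz_mem hray_mem
  simpa only [← smul_add, sub_add_sub_cancel, zero_add] using hdiff.add hray

/-- `w` is a sequence of feasible points approaching `x` along `d` at the step lengths `T`, on which
`f` exceeds `f x` by at most `o(T)`. The `o(T)` term is written as `ρ² / 2 * T`, so that `ρ` is the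
accuracy of the penalty steps started at `w`. -/
structure IsFeasiblePath (f : Eu n → ℝ) (F : Eu n → Eu l) (Γ : Set (Eu l)) (x d : Eu n)
    (T ρ : ℕ → ℝ) (w : ℕ → Eu n) : Prop where
  step_pos : ∀ k, 0 < T k
  tendsto_step : Tendsto T atTop (𝓝 0)
  accuracy_pos : ∀ k, 0 < ρ k
  tendsto_accuracy : Tendsto ρ atTop (𝓝 0)
  tendsto_direction : Tendsto (fun k => (T k)⁻¹ • (w k - x)) atTop (𝓝 d)
  mem : ∀ k, F (w k) ∈ Γ
  apply_le : ∀ k, f (w k) ≤ f x + ρ k ^ 2 / 2 * T k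

theorem IsFeasiblePath.comp {T ρ : ℕ → ℝ} {w : ℕ → Eu n} (h : IsFeasiblePath f F Γ x d T ρ w)
    {φ : ℕ → ℕ} (hφ : Tendsto φ atTop atTop) :
    IsFeasiblePath f F Γ x d (T ∘ φ) (ρ ∘ φ) (w ∘ φ) where
  step_pos k := h.step_pos (φ k)
  tendsto_step := h.tendsto_step.comp hφ
  accuracy_pos k := h.accuracy_pos (φ k)
  tendsto_accuracy := h.tendsto_accuracy.comp hφ
  tendsto_direction := h.tendsto_direction.comp hφ
  mem k := h.mem (φ k)
  apply_le k := h.apply_le (φ k)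

theorem exists_isFeasiblePath (hf : DifferentiableAt ℝ f x) (hd : d ∈ implCritCone f F Γ x) :
    ∃ T ρ w, IsFeasiblePath f F Γ x d T ρ w := by
  obtain ⟨hcrit, -, u, T, hu, hT, hT₀, hmem⟩ := hd
  let η : ℕ → ℝ := fun k => max 0 ((T k)⁻¹ * (f (x + T k • u k) - f x)) + 1 / ((k : ℝ) + 1)
  have hη : ∀ k, 0 < η k := fun k => by positivity
  have hη₀ : Tendsto η atTop (𝓝 0) := by
    have h := (tendsto_const_nhds (x := (0 : ℝ)).max
      (tendsto_inv_mul_sub_gradient hf hT hT₀ hu)).add tendsto_one_div_add_atTop_nhds_zero_nat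
    rwa [max_eq_left hcrit, add_zero] at h
  have hle : ∀ k, f (x + T k • u k) ≤ f x + η k * T k := fun k => by
    have hquot : (T k)⁻¹ * (f (x + T k • u k) - f x) ≤ η k :=
      (le_max_right _ _).trans (le_add_of_nonneg_right (by positivity))
    rw [inv_mul_le_iff₀ (hT k)] at hquot
    linarith
  refine ⟨T, fun k => √(2 * η k), fun k => x + T k • u k, hT, hT₀,
    fun k => Real.sqrt_pos.mpr (mul_pos two_pos (hη k)), by simpa using (hη₀.const_mul 2).sqrt,
    hu.congr fun k => ?_, hmem, fun k => ?_⟩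
  · rw [add_sub_cancel_left, inv_smul_smul₀ (hT k).ne']
  · rw [Real.sq_sqrt (mul_pos two_pos (hη k)).le, mul_div_cancel_left₀ _ two_ne_zero]
    exact hle k

theorem IsFeasiblePath.eventually_exists_isAMStep {T ρ : ℕ → ℝ} {w : ℕ → Eu n}
    (h : IsFeasiblePath f F (GammaODP a b) x d T ρ w) (hf : ContDiff ℝ 1 f)
    (hF : LocallyLipschitz F) (hF' : IsDirDeriv F F') (hsum : SumRule F F')
    (hmin : IsLocalMinOn f (F ⁻¹' GammaODP a b) x) :
    ∀ᶠ k in atTop, ∃ p, IsAMStep f F a b (w k) (T k) (ρ k) p := by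
  obtain ⟨r, hr, hmin⟩ := exists_isMinOn_closedBall_inter hmin
  have hw := tendsto_of_tendsto_inv_smul_sub h.step_pos h.tendsto_step h.tendsto_direction
  have hsmall : Tendsto (fun k => ‖w k - x‖ + ρ k * T k) atTop (𝓝 0) := by
    simpa using (hw.sub_const x).norm.add (h.tendsto_accuracy.mul h.tendsto_step)
  filter_upwards [hsmall.eventually_lt_const hr] with k hk
  obtain ⟨z, δ, m, hpen⟩ := exists_isPenaltyPoint hf hF (isClosed_GammaODP a b) hmin (h.mem k)
    (h.step_pos k) (h.accuracy_pos k) (h.apply_le k) hk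
  exact hpen.exists_isAMStep hF hF' hsum (h.step_pos k) (h.accuracy_pos k)

/-- `p` is a sequence of stationarity steps started along a feasible path, with constant active
index set `I` and constant multiplier signs `σ`. -/
structure IsPatternSeq (f : Eu n → ℝ) (F : Eu n → Eu l) (a b : Fin t → Fin l → EReal) (x d : Eu n)
    (T ρ : ℕ → ℝ) (w : ℕ → Eu n) (p : ℕ → AMTuple n l) (I : Set (Fin l)) (σ : Fin l → SignType) :
    Prop extends IsFeasiblePath f F (GammaODP a b) x d T ρ w where
  isAMStep : ∀ k, IsAMStep f F a b (w k) (T k) (ρ k) (p k)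
  activeI_eq : ∀ k, activeI F a b (p k).x (p k).δ = I
  sign_eq : ∀ k i, SignType.sign ((p k).lam i) = σ i

theorem exists_isPatternSeq (hf : ContDiff ℝ 1 f) (hF : LocallyLipschitz F)
    (hF' : IsDirDeriv F F') (hsum : SumRule F F')
    (hmin : IsLocalMinOn f (F ⁻¹' GammaODP a b) x) (hd : d ∈ implCritCone f F (GammaODP a b) x) :
    ∃ T ρ w p I σ, IsPatternSeq f F a b x d T ρ w p I σ := by
  obtain ⟨T, ρ, w, hw⟩ := exists_isFeasiblePath (hf.differentiable one_ne_zero x) hd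
  obtain ⟨φ, p, ⟨I, σ⟩, hφ, hp⟩ := exists_subsequence_of_eventually_exists
    (hw.eventually_exists_isAMStep hf hF hF' hsum hmin)
    fun p => (activeI F a b p.x p.δ, fun i => SignType.sign (p.lam i))
  exact ⟨_, _, _, p, I, σ, hw.comp hφ, fun k => (hp k).1, fun k => congrArg Prod.fst (hp k).2,
    fun k => congrFun (congrArg Prod.snd (hp k).2)⟩

namespace IsPatternSeq

variable {T ρ : ℕ → ℝ} {w : ℕ → Eu n} {p : ℕ → AMTuple n l} {I : Set (Fin l)}
  {σ : Fin l → SignType}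

theorem comp (h : IsPatternSeq f F a b x d T ρ w p I σ) {φ : ℕ → ℕ}
    (hφ : Tendsto φ atTop atTop) :
    IsPatternSeq f F a b x d (T ∘ φ) (ρ ∘ φ) (w ∘ φ) (p ∘ φ) I σ where
  toIsFeasiblePath := h.toIsFeasiblePath.comp hφ
  isAMStep k := h.isAMStep (φ k)
  activeI_eq k := h.activeI_eq (φ k)
  sign_eq k := h.sign_eq (φ k)

theorem tendsto_inv_smul_x_sub (h : IsPatternSeq f F a b x d T ρ w p I σ) :
    Tendsto (fun k => (T k)⁻¹ • ((p k).x - x)) atTop (𝓝 d) := by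
  have hdrift := tendsto_inv_smul_zero_of_norm_le h.step_pos h.tendsto_accuracy
    fun k => (h.isAMStep k).norm_sub_le
  simpa only [← smul_add, sub_add_sub_cancel, zero_add] using hdrift.add h.tendsto_direction

theorem tendsto_inv_smul_δ (h : IsPatternSeq f F a b x d T ρ w p I σ) :
    Tendsto (fun k => (T k)⁻¹ • (p k).δ) atTop (𝓝 0) :=
  tendsto_inv_smul_zero_of_norm_le h.step_pos (by simpa using h.tendsto_accuracy.const_mul 2)
    fun k => (h.isAMStep k).norm_δ_le

theorem tendsto_x (h : IsPatternSeq f F a b x d T ρ w p I σ) :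
    Tendsto (fun k => (p k).x) atTop (𝓝 x) :=
  tendsto_of_tendsto_inv_smul_sub h.step_pos h.tendsto_step h.tendsto_inv_smul_x_sub

theorem tendsto_δ (h : IsPatternSeq f F a b x d T ρ w p I σ) :
    Tendsto (fun k => (p k).δ) atTop (𝓝 0) :=
  tendsto_of_tendsto_inv_smul_sub h.step_pos h.tendsto_step
    (by simpa only [sub_zero] using h.tendsto_inv_smul_δ)

theorem amSeq (h : IsPatternSeq f F a b x d T ρ w p I σ) :
    AMSeq f F (GammaODP a b) x (fun k => (p k).x) (fun k => (p k).lam) (fun k => (p k).δ)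
      fun k => (p k).ε :=
  ⟨fun k => (h.isAMStep k).mem_scalSubdiff,
    fun k => regNormal_subset_limNormal _ _ (h.isAMStep k).mem_regNormal, h.tendsto_x, h.tendsto_δ,
    squeeze_zero_norm (fun k => (h.isAMStep k).norm_ε_le)
      (by simpa using h.tendsto_accuracy.const_mul 3)⟩

theorem subset_activeI (h : IsPatternSeq f F a b x d T ρ w p I σ) (hF : Continuous F) :
    I ⊆ activeI F a b x 0 := by
  have hlim : Tendsto (fun k => F (p k).x - (p k).δ) atTop (𝓝 (F x - 0)) :=
    ((hF.tendsto x).comp h.tendsto_x).sub h.tendsto_δ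
  obtain ⟨k, hk⟩ := (hlim.eventually (eventually_activeIndices_subset a b _)).exists
  exact h.activeI_eq k ▸ hk

theorem signMul_mem_dirLimNormal (h : IsPatternSeq f F a b x d T ρ w p I σ)
    (hF : LocallyLipschitz F) (hF' : IsDirDeriv F F') (hx : F x ∈ GammaODP a b) {u : Eu l}
    (hu : ∀ i, 0 ≤ u i) (k : ℕ) :
    signMul u (p k).lam ∈ dirLimNormal (GammaODP a b) (F x) (F' x d) := by
  refine mem_dirLimNormal_of_tendsto hx (y := fun j => F (p j).x - (p j).δ) h.step_pos
    h.tendsto_step ?_ fun j => ?_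
  · have hdir := (hF'.tendsto_inv_smul_sub hF h.step_pos h.tendsto_step
      h.tendsto_inv_smul_x_sub).sub h.tendsto_inv_smul_δ
    simpa only [← smul_sub, sub_right_comm, sub_zero] using hdir
  · rw [signMul_congr fun i => (h.sign_eq k i).trans (h.sign_eq j i).symm]
    exact signMul_mem_regNormal (h.isAMStep j).mem_regNormal hu

theorem zero_notMem (h : IsPatternSeq f F a b x d T ρ w p I σ) (hF : LocallyLipschitz F)
    (hF' : IsDirDeriv F F') (hsum : SumRule F F') (hx : F x ∈ GammaODP a b)
    (hreg : FOSCMS F F' (GammaODP a b) x d) (u : Eu l) (hu₀ : u ≠ 0) (hu : ∀ i, 0 ≤ u i)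
    (huI : ∀ i ∉ I, u i = 0) (k : ℕ) :
    (0 : Eu n) ∉ {v | ∃ s : Fin l → Eu n,
      (∀ i ∈ I, s i ∈ u i • dirLimSubdiff (fun y => Real.sign ((p k).lam i) * F y i) x d
        (Real.sign ((p k).lam i) * F' x d i)) ∧ v = ∑ i, I.indicator s i} :=
  zero_notMem_of_FOSCMS hsum hreg hu₀ hu huI
    (fun i hi => (h.isAMStep k).lam_ne_zero i (h.activeI_eq k ▸ hi))
    (h.signMul_mem_dirLimNormal hF hF' hx hu k)

theorem eventually_ne_and_lt_norm_gradient (h : IsPatternSeq f F a b x d T ρ w p I σ)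
    (hf : ContDiff ℝ 1 f) (hd : d ≠ 0) (hgrad : gradient f x ≠ 0) :
    ∀ᶠ k in atTop, (p k).x ≠ x ∧ 2 * ρ k < ‖gradient f (p k).x‖ := by
  have hne : ∀ᶠ k in atTop, (p k).x ≠ x := by
    filter_upwards [h.tendsto_inv_smul_x_sub.eventually_ne hd] with k hk hx
    exact hk (by rw [hx, sub_self, smul_zero])
  have hlim := ((continuous_gradient hf).norm.tendsto x).comp h.tendsto_x
  refine hne.and ((h.tendsto_accuracy.const_mul 2).eventually_lt hlim ?_)
  simpa using hgrad

theorem amSeqDir (h : IsPatternSeq f F a b x d T ρ w p I σ) (hd : ‖d‖ = 1)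
    (hp : ∀ k, (p k).x ≠ x ∧ 2 * ρ k < ‖gradient f (p k).x‖) :
    AMSeqDir f F (GammaODP a b) x (fun k => (p k).x) (fun k => (p k).lam) (fun k => (p k).δ)
      (fun k => (p k).ε) d := by
  have hnormalize {G : Type} [NormedAddCommGroup G] [NormedSpace ℝ G] {u : ℕ → G} {c : G}
      (hu : Tendsto (fun k => (T k)⁻¹ • u k) atTop (𝓝 c)) :
      Tendsto (fun k => ‖(p k).x - x‖⁻¹ • u k) atTop (𝓝 c) :=
    tendsto_norm_inv_smul_of_tendsto_inv_smul h.step_pos hd h.tendsto_inv_smul_x_sub hu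
  have hproduct : Tendsto (fun k => (T k)⁻¹ • (‖(p k).δ‖ * ‖(p k).lam‖)) atTop (𝓝 0) :=
    tendsto_inv_smul_zero_of_norm_le h.step_pos
      (by simpa using (h.tendsto_accuracy.pow 2).const_mul 16) fun k => by
        rw [Real.norm_of_nonneg (by positivity)]
        exact (h.isAMStep k).norm_mul_norm_le (hp k).2
  obtain ⟨M, hM⟩ := (hnormalize hproduct).bddAbove_range
  refine ⟨h.amSeq, fun k => (hp k).1, hnormalize h.tendsto_inv_smul_x_sub,
    hnormalize h.tendsto_inv_smul_δ, ⟨fun k => 8 * ρ k, fun k => ?_, ?_, fun k => ?_⟩, M,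
    fun k => ?_⟩
  · exact mul_nonneg (by norm_num) (h.accuracy_pos k).le
  · simpa using h.tendsto_accuracy.const_mul 8
  · exact (h.isAMStep k).aligned (hp k).2
  · simpa only [div_eq_inv_mul, smul_eq_mul] using hM (mem_range_self k)

end IsPatternSeq

end Sequences

section ConstraintQualifications

variable {n l t : ℕ} {f : Eu n → ℝ} {F : Eu n → Eu l} {F' : Eu n → Eu n → Eu l}
  {a b : Fin t → Fin l → EReal} {x : Eu n}

theorem zero_mem_implCritCone {Γ : Set (Eu l)} (hx : F x ∈ Γ) : 0 ∈ implCritCone f F Γ x :=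
  ⟨by simp, hx, 0, fun k => 1 / ((k : ℝ) + 1), tendsto_const_nhds, fun k => by positivity,
    tendsto_one_div_add_atTop_nhds_zero_nat, fun k => by simpa using hx⟩

theorem ODPsubMFC_of_NNAMCQ (hf : ContDiff ℝ 1 f) (hF : LocallyLipschitz F)
    (hF' : IsDirDeriv F F') (hsum : SumRule F F') (hx : F x ∈ GammaODP a b)
    (hmin : IsLocalMinOn f (F ⁻¹' GammaODP a b) x) (hreg : NNAMCQ F (GammaODP a b) x) :
    ODPsubMFC f F a b x := by
  obtain ⟨T, ρ, w, p, I, σ, hp⟩ :=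
    exists_isPatternSeq hf hF hF' hsum hmin (zero_mem_implCritCone hx)
  refine ⟨I, _, _, _, _, hp.subset_activeI hF.continuous, hp.amSeq,
    fun k => (hp.activeI_eq k).symm, .inr ?_⟩
  simpa only [hF'.apply_zero, PiLp.zero_apply, mul_zero, dirLimSubdiff_zero] using
    hp.zero_notMem hF hF' hsum hx ((FOSCMS_zero_iff hF').mpr hreg)

theorem ODPsubMFCdir_of_FOSCMS (hf : ContDiff ℝ 1 f) (hF : LocallyLipschitz F)
    (hF' : IsDirDeriv F F') (hsum : SumRule F F') (hx : F x ∈ GammaODP a b)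
    (hmin : IsLocalMinOn f (F ⁻¹' GammaODP a b) x) {d : Eu n}
    (hd : d ∈ implCritCone f F (GammaODP a b) x) (hd₁ : ‖d‖ = 1) (hgrad : gradient f x ≠ 0)
    (hreg : FOSCMS F F' (GammaODP a b) x d) : ODPsubMFCdir f F F' a b x d := by
  obtain ⟨T, ρ, w, p, I, σ, hp⟩ := exists_isPatternSeq hf hF hF' hsum hmin hd
  have hd₀ : d ≠ 0 := norm_ne_zero_iff.mp (by simp [hd₁])
  obtain ⟨N, hN⟩ := eventually_atTop.mp (hp.eventually_ne_and_lt_norm_gradient hf hd₀ hgrad)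
  have htail := hp.comp (tendsto_add_atTop_nat N)
  exact ⟨I, _, _, _, _, htail.subset_activeI hF.continuous,
    htail.amSeqDir hd₁ fun k => hN (k + N) (Nat.le_add_left N k),
    fun k => (htail.activeI_eq k).symm, .inr (htail.zero_notMem hF hF' hsum hx hreg)⟩

end ConstraintQualifications

/-- NNAMCQ implies ODP-subMFC, and FOSCMS(d) implies ODP-subMFC(d), at local minimizers
of the orthodisjunctive problem. -/
theorem stmt19 {n l t : ℕ}
    (f : Eu n → ℝ) (hf : ContDiff ℝ 1 f)
    (F : Eu n → Eu l) (F' : Eu n → Eu n → Eu l)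
    (hLip : LocallyLipschitz F) (hF' : IsDirDeriv F F')
    (a b : Fin t → Fin l → EReal) (hab : ∀ j i, a j i ≤ b j i)
    (hsum : SumRule F F')
    (x : Eu n) (hfeas : F x ∈ GammaODP a b)
    (hmin : IsLocalMinOn f (F ⁻¹' GammaODP a b) x) :
    (NNAMCQ F (GammaODP a b) x → ODPsubMFC f F a b x) ∧
    (∀ d ∈ implCritCone f F (GammaODP a b) x, ‖d‖ = 1 → gradient f x ≠ 0 →
      FOSCMS F F' (GammaODP a b) x d → ODPsubMFCdir f F F' a b x d) :=
  ⟨ODPsubMFC_of_NNAMCQ hf hLip hF' hsum hfeas hmin, fun _ hd hd₁ hgrad =>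
    ODPsubMFCdir_of_FOSCMS hf hLip hF' hsum hfeas hmin hd hd₁ hgrad⟩

end
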